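/- arXiv:1410.7095 — 4 statements merged into one kernel-verified Lean document; each statement's English description precedes it below -/
import Mathlib

section
/- Let ∇K ∈ W^{1,∞}(ℝ^d), T > 0, and let f_ε : [0,T] × ℝ^d × ℝ^d → [0,∞) be a C¹, nonnegative classical solution of the kinetic aggregation equation ∂_t f_ε + v·∇_x f_ε = (1/ε) ∇_v·((v + ∇K ∗ ρ_ε) f_ε), compactly supported in (x,v) uniformly for t ∈ [0,T], with initial datum f₀ satisfying (1 + |v|) f₀ ∈ L¹(ℝ^d × ℝ^d). Set I(t) = ∫∫_{ℝ^d×ℝ^d} |v + (∇K ∗ ρ_ε)(t,x)| f_ε(t,x,v) dx dv. Then there exist constants C₀ and ε₀ > 0, depending only on ‖∇K‖_{W^{1,∞}} and ‖(1+|v|) f₀‖_{L¹}, such that for every ε ≤ ε₀ and every t ∈ [0,T], I(t) ≤ I(0) e^{−t/(2ε)} + C₀ ε. -/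
open Set Filter Topology MeasureTheory

variable {d : ℕ}

/-- The macroscopic density `ρ(t,x) = ∫ f(t,x,v) dv` of a phase-space density. -/
noncomputable def kinDensity
    (f : ℝ × EuclideanSpace ℝ (Fin d) × EuclideanSpace ℝ (Fin d) → ℝ)
    (t : ℝ) (x : EuclideanSpace ℝ (Fin d)) : ℝ :=
  ∫ v, f (t, x, v)

/-- The interaction field `(∇K ∗ ρ)(t,x) = ∫ ∇K(x-y) ρ(t,y) dy`. -/
noncomputable def kinField
    (gradK : EuclideanSpace ℝ (Fin d) → EuclideanSpace ℝ (Fin d))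
    (f : ℝ × EuclideanSpace ℝ (Fin d) × EuclideanSpace ℝ (Fin d) → ℝ)
    (t : ℝ) (x : EuclideanSpace ℝ (Fin d)) : EuclideanSpace ℝ (Fin d) :=
  ∫ y, (kinDensity f t y) • gradK (x - y)

/-- The generalized first moment
`I(t) = ∫∫ |v + (∇K ∗ ρ)(t,x)| f(t,x,v) dx dv`. -/
noncomputable def kinMoment
    (gradK : EuclideanSpace ℝ (Fin d) → EuclideanSpace ℝ (Fin d))
    (f : ℝ × EuclideanSpace ℝ (Fin d) × EuclideanSpace ℝ (Fin d) → ℝ)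
    (t : ℝ) : ℝ :=
  ∫ p : EuclideanSpace ℝ (Fin d) × EuclideanSpace ℝ (Fin d),
    ‖p.2 + kinField gradK f t p.1‖ * f (t, p.1, p.2)

/-!
Let `I` be the moment, `M` the mass, and `A`, `L` the supremum and the Lipschitz constant of `∇K`.
The field `u = ∇K ∗ ρ` is only Lipschitz in `x`, so the divergence theorem and the exact
characteristic flow are avoided: a `C¹` solution is transported by one semi-implicit Euler step of
length `h` of the characteristic system `x' = v`, `ε v' = -(v + u)`. The step has constant Jacobian,
and since the pull-back of `f` along it has zero derivative at `h = 0`, by the equation, its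
weighted `L¹` error is `o(h)`.

The step multiplies `v + u(x)` by `1 - h / ε` and moves positions by at most `h (I + A M²)` in
`L¹(f)`. Averaged over `f`, this changes `u` by at most `L M h (I + A M²)` through its argument `x`
and by as much again through `ρ`, so that `I' ≤ -I / ε + 2 L M (I + A M²)` in the sense of right
Dini derivatives. If `4 L M ε ≤ 1`, half of the dissipation absorbs the linear term, and Grönwall's
inequality concludes.
-/

section EulerStep

variable {E : Type*} [NormedAddCommGroup E] [NormedSpace ℝ E]

/-- The velocity after one step of length `h` of the semi-implicit Euler scheme for the
characteristic system `x' = v`, `ε v' = -(v + u(x))`. -/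
noncomputable def eulerVelocity (ε h : ℝ) (u : E → E) (p : E × E) : E :=
  (1 - h / ε) • p.2 - (h / ε) • u p.1

/-- One step of length `h` of the semi-implicit Euler scheme for the characteristic system
`x' = v`, `ε v' = -(v + u(x))`. Moving with the updated velocity makes the step a relaxation in `v`
followed by a shear in `x`, so its Jacobian is constant even though `u` need not be
differentiable. -/
noncomputable def eulerStep (ε h : ℝ) (u : E → E) (p : E × E) : E × E :=
  (p.1 + h • eulerVelocity ε h u p, eulerVelocity ε h u p)

lemma eulerStep_zero (ε : ℝ) (u : E → E) (p : E × E) : eulerStep ε 0 u p = p := by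
  simp [eulerStep, eulerVelocity]

@[fun_prop]
lemma continuous_eulerStep {X : Type*} [TopologicalSpace X] {ε : ℝ} {u : E → E} {h : X → ℝ}
    {p : X → E × E} (hu : Continuous u) (hh : Continuous h) (hp : Continuous p) :
    Continuous fun x => eulerStep ε (h x) u (p x) := by
  unfold eulerStep eulerVelocity
  fun_prop

lemma norm_eulerVelocity_le {ε h : ℝ} (hh : 0 ≤ h) (hε : h < ε) (u : E → E) (p : E × E) :
    ‖eulerVelocity ε h u p‖ ≤ ‖p.2 + u p.1‖ + ‖u p.1‖ := by
  have hk₀ : 0 ≤ h / ε := div_nonneg hh (hh.trans hε.le)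
  have hk₁ : h / ε ≤ 1 := div_le_one_of_le₀ hε.le (hh.trans hε.le)
  have hsplit : eulerVelocity ε h u p = (1 - h / ε) • (p.2 + u p.1) - u p.1 := by
    unfold eulerVelocity
    module
  calc ‖eulerVelocity ε h u p‖ ≤ ‖(1 - h / ε) • (p.2 + u p.1)‖ + ‖u p.1‖ :=
        hsplit ▸ norm_sub_le _ _
    _ ≤ ‖p.2 + u p.1‖ + ‖u p.1‖ := by
        rw [norm_smul, Real.norm_of_nonneg (sub_nonneg.2 hk₁)]
        gcongr
        exact mul_le_of_le_one_left (norm_nonneg _) (by linarith)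

lemma norm_eulerStep_fst_sub_le {ε h : ℝ} (hh : 0 ≤ h) (hε : h < ε) (u : E → E) (p : E × E) :
    ‖(eulerStep ε h u p).1 - p.1‖ ≤ h * (‖p.2 + u p.1‖ + ‖u p.1‖) := by
  rw [eulerStep, add_sub_cancel_left, norm_smul, Real.norm_of_nonneg hh]
  gcongr
  exact norm_eulerVelocity_le hh hε u p

lemma norm_eulerStep_snd_add_le {ε h : ℝ} (hε : h / ε ≤ 1) (u w : E → E) (p : E × E) :
    ‖(eulerStep ε h u p).2 + w (eulerStep ε h u p).1‖ ≤
      (1 - h / ε) * ‖p.2 + u p.1‖ + ‖u (eulerStep ε h u p).1 - u p.1‖ +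
        ‖w (eulerStep ε h u p).1 - u (eulerStep ε h u p).1‖ := by
  have hsplit : (eulerStep ε h u p).2 + w (eulerStep ε h u p).1 =
      (1 - h / ε) • (p.2 + u p.1) + (u (eulerStep ε h u p).1 - u p.1) +
        (w (eulerStep ε h u p).1 - u (eulerStep ε h u p).1) := by
    simp only [eulerStep, eulerVelocity]
    module
  have hrelax : ‖(1 - h / ε) • (p.2 + u p.1)‖ = (1 - h / ε) * ‖p.2 + u p.1‖ := by
    rw [norm_smul, Real.norm_of_nonneg (sub_nonneg.2 hε)]
  rw [hsplit, ← hrelax]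
  exact norm_add₃_le

lemma norm_eulerStep_le {ε h : ℝ} (hh : 0 ≤ h) (h₁ : h ≤ 1) (hε : h < ε) (u : E → E) (p : E × E) :
    ‖eulerStep ε h u p‖ ≤ 2 * ‖p‖ + 2 * ‖u p.1‖ := by
  have hp₁ := norm_fst_le p
  have hp₂ := norm_snd_le p
  have hw : ‖eulerVelocity ε h u p‖ ≤ ‖p‖ + 2 * ‖u p.1‖ := by
    linarith [norm_eulerVelocity_le hh hε u p, norm_add_le p.2 (u p.1)]
  refine norm_prod_le_iff.2 ⟨?_, ?_⟩
  · calc ‖p.1 + h • eulerVelocity ε h u p‖ ≤ ‖p.1‖ + h * ‖eulerVelocity ε h u p‖ := by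
          simpa [norm_smul, abs_of_nonneg hh] using norm_add_le p.1 (h • eulerVelocity ε h u p)
      _ ≤ ‖p.1‖ + ‖eulerVelocity ε h u p‖ := by
          gcongr
          exact mul_le_of_le_one_left (norm_nonneg _) h₁
      _ ≤ 2 * ‖p‖ + 2 * ‖u p.1‖ := by linarith
  · exact hw.trans (by linarith [norm_nonneg p])

lemma norm_le_norm_eulerStep {ε h : ℝ} (hh : 0 ≤ h) (h₁ : h ≤ 1) (hε₀ : 0 < ε) (hε : 2 * h ≤ ε)
    (u : E → E) (p : E × E) : ‖p‖ ≤ 2 * ‖eulerStep ε h u p‖ + ‖u p.1‖ := by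
  have hk₀ : 0 ≤ h / ε := by positivity
  have hk : h / ε ≤ 1 / 2 := by rw [div_le_iff₀ hε₀]; linarith
  have hx : ‖p.1 + h • eulerVelocity ε h u p‖ ≤ ‖eulerStep ε h u p‖ :=
    norm_fst_le (eulerStep ε h u p)
  have hw : ‖eulerVelocity ε h u p‖ ≤ ‖eulerStep ε h u p‖ := norm_snd_le (eulerStep ε h u p)
  refine norm_prod_le_iff.2 ⟨?_, ?_⟩
  · have hback : ‖p.1‖ ≤ ‖p.1 + h • eulerVelocity ε h u p‖ + h * ‖eulerVelocity ε h u p‖ := by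
      simpa [norm_smul, abs_of_nonneg hh] using
        norm_sub_le (p.1 + h • eulerVelocity ε h u p) (h • eulerVelocity ε h u p)
    nlinarith [norm_nonneg (u p.1), norm_nonneg (eulerVelocity ε h u p)]
  · have hsplit : (1 - h / ε) • p.2 = eulerVelocity ε h u p + (h / ε) • u p.1 := by
      simp [eulerVelocity]
    have hback : (1 - h / ε) * ‖p.2‖ ≤ ‖eulerVelocity ε h u p‖ + h / ε * ‖u p.1‖ := by
      have := norm_add_le (eulerVelocity ε h u p) ((h / ε) • u p.1)
      rwa [← hsplit, norm_smul, norm_smul, Real.norm_of_nonneg hk₀,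
        Real.norm_of_nonneg (by linarith : 0 ≤ 1 - h / ε)] at this
    nlinarith [norm_nonneg p.2, norm_nonneg (u p.1)]

end EulerStep

section ChangeOfVariables

variable {E : Type*} [NormedAddCommGroup E] [NormedSpace ℝ E] [FiniteDimensional ℝ E]
  [MeasureSpace E] [BorelSpace E] [(volume : Measure E).IsAddHaarMeasure]

lemma measurePreserving_shear (h : ℝ) :
    MeasurePreserving (fun p : E × E => (p.1 + h • p.2, p.2)) := by
  have hswap : MeasurePreserving (fun p : E × E => (p.1, p.2 + h • p.1))
      (volume.prod volume) (volume.prod volume) :=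
    (MeasurePreserving.id volume).skew_product (g := fun x v => v + h • x)
      (Continuous.measurable (by fun_prop))
      (.of_forall fun x => (measurePreserving_add_right volume (h • x)).map_eq)
  exact (Measure.measurePreserving_swap.comp hswap).comp Measure.measurePreserving_swap

lemma map_smul_sub_const {c : ℝ} (hc : c ≠ 0) (a : E) :
    Measure.map (fun v : E => c • v - a) volume =
      ENNReal.ofReal |(c ^ Module.finrank ℝ E)⁻¹| • volume := by
  have hcomp : (fun v : E => c • v - a) = (fun v => v - a) ∘ (c • ·) := rfl
  rw [hcomp, ← Measure.map_map (by fun_prop) (by fun_prop), Measure.map_addHaar_smul _ hc,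
    Measure.map_smul, (measurePreserving_sub_right volume a).map_eq]

lemma measurePreserving_eulerStep {ε h : ℝ} (hε : h / ε ≠ 1) {u : E → E} (hu : Measurable u) :
    MeasurePreserving (eulerStep ε h u) volume
      (ENNReal.ofReal |((1 - h / ε) ^ Module.finrank ℝ E)⁻¹| • volume) := by
  set c := ENNReal.ofReal |((1 - h / ε) ^ Module.finrank ℝ E)⁻¹|
  have hrelax : MeasurePreserving (fun p : E × E => (p.1, (1 - h / ε) • p.2 - (h / ε) • u p.1))
      (volume.prod volume) (volume.prod (c • volume)) :=
    (MeasurePreserving.id volume).skew_product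
      (g := fun x v => (1 - h / ε) • v - (h / ε) • u x) (by fun_prop)
      (.of_forall fun x => map_smul_sub_const (sub_ne_zero.2 hε.symm) _)
  have hshear := (measurePreserving_shear (E := E) h).smul_measure c
  rw [Measure.prod_smul_right] at hrelax
  exact hshear.comp hrelax

lemma integral_eulerStep {ε h : ℝ} (hε : h / ε < 1) {u : E → E} (hu : Measurable u)
    {F : Type*} [NormedAddCommGroup F] [NormedSpace ℝ F] {g : E × E → F}
    (hg : AEStronglyMeasurable g) :
    ∫ p, (1 - h / ε) ^ Module.finrank ℝ E • g (eulerStep ε h u p) = ∫ p, g p := by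
  have hJ : 0 < (1 - h / ε) ^ Module.finrank ℝ E := pow_pos (by linarith) _
  have hΦ := measurePreserving_eulerStep hε.ne hu
  rw [integral_smul, ← integral_map hΦ.aemeasurable (hΦ.map_eq ▸ hg.smul_measure _), hΦ.map_eq,
    integral_smul_measure, ENNReal.toReal_ofReal (abs_nonneg _), abs_of_pos (inv_pos.2 hJ),
    smul_inv_smul₀ hJ.ne']

lemma integrable_comp_eulerStep {ε h : ℝ} (hε : h / ε ≠ 1) {u : E → E} (hu : Measurable u)
    {F : Type*} [NormedAddCommGroup F] {g : E × E → F} (hg : Integrable g) :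
    Integrable fun p => g (eulerStep ε h u p) :=
  (measurePreserving_eulerStep hε hu).integrable_comp_of_integrable
    (hg.smul_measure ENNReal.ofReal_ne_top)

end ChangeOfVariables

section FirstOrder

lemma eventually_norm_sub_le_of_hasDerivAt_eq_zero {X F : Type*} [TopologicalSpace X]
    [NormedAddCommGroup F] [NormedSpace ℝ F] {G G' : ℝ → X → F} {S : Set X} {a δ : ℝ}
    (hG : ∀ s, ∀ x ∈ S, HasDerivAt (G · x) (G' s x) s) (hG' : Continuous (Function.uncurry G'))
    (hS : IsCompact S) (hzero : ∀ x ∈ S, G' a x = 0) (hδ : 0 < δ) :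
    ∀ᶠ s in 𝓝 a, ∀ x ∈ S, ‖G s x - G a x‖ ≤ δ * ‖s - a‖ := by
  have hsmall : ∀ᶠ s in 𝓝 a, ∀ x ∈ S, ‖G' s x‖ ≤ δ := by
    refine hS.eventually_forall_of_forall_eventually fun x hx => ?_
    have hlim : Tendsto (fun q : ℝ × X => ‖G' q.1 q.2‖) (𝓝 (a, x)) (𝓝 0) := by
      simpa [Function.uncurry, hzero x hx] using (hG'.tendsto (a, x)).norm
    exact hlim.eventually_le_const hδ
  obtain ⟨r, hr, hball⟩ := Metric.eventually_nhds_iff_ball.1 hsmall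
  filter_upwards [Metric.ball_mem_nhds a hr] with s hs x hx
  exact (convex_ball a r).norm_image_sub_le_of_norm_hasDerivWithin_le
    (fun τ _ => (hG τ x hx).hasDerivWithinAt) (fun τ hτ => hball τ hτ x hx)
    (Metric.mem_ball_self hr) hs

variable {E : Type*} [NormedAddCommGroup E] [NormedSpace ℝ E]

/-- The pull-back to time `t` of the phase-space density `f (s, ·)` along an Euler step from `t`
to `s`, that is `f (s, ·)` composed with the step and multiplied by its Jacobian. -/
noncomputable def eulerPullback (ε : ℝ) (u : E → E) (f : ℝ × E × E → ℝ) (t s : ℝ) (p : E × E) : ℝ :=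
  (1 - (s - t) / ε) ^ Module.finrank ℝ E * f (s, eulerStep ε (s - t) u p)

/-- The derivative of `eulerPullback` in its final time `s`. -/
noncomputable def eulerPullbackDeriv (ε : ℝ) (u : E → E) (f : ℝ × E × E → ℝ) (t s : ℝ)
    (p : E × E) : ℝ :=
  -(Module.finrank ℝ E * (1 - (s - t) / ε) ^ (Module.finrank ℝ E - 1) * ε⁻¹) *
      f (s, eulerStep ε (s - t) u p) +
    (1 - (s - t) / ε) ^ Module.finrank ℝ E *
      fderiv ℝ f (s, eulerStep ε (s - t) u p)
        (1, eulerVelocity ε (s - t) u p - (s - t) • ε⁻¹ • (p.2 + u p.1), -(ε⁻¹ • (p.2 + u p.1)))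

lemma eulerPullback_self (ε : ℝ) (u : E → E) (f : ℝ × E × E → ℝ) (t : ℝ) (p : E × E) :
    eulerPullback ε u f t t p = f (t, p) := by
  simp [eulerPullback, eulerStep_zero]

lemma hasDerivAt_eulerPullback {f : ℝ × E × E → ℝ} (hf : Differentiable ℝ f) (ε : ℝ) (u : E → E)
    (t s : ℝ) (p : E × E) :
    HasDerivAt (eulerPullback ε u f t · p) (eulerPullbackDeriv ε u f t s p) s := by
  have hh : HasDerivAt (· - t) 1 s := (hasDerivAt_id s).sub_const t
  have hk : HasDerivAt (fun s => (s - t) / ε) ε⁻¹ s := by simpa using hh.div_const ε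
  have hJ : HasDerivAt (fun s => (1 - (s - t) / ε) ^ Module.finrank ℝ E)
      (-(Module.finrank ℝ E * (1 - (s - t) / ε) ^ (Module.finrank ℝ E - 1) * ε⁻¹)) s := by
    simpa using (hk.const_sub 1).fun_pow (Module.finrank ℝ E)
  have hV : HasDerivAt (fun s => eulerVelocity ε (s - t) u p) (-(ε⁻¹ • (p.2 + u p.1))) s :=
    (((hk.const_sub 1).smul_const p.2).sub (hk.smul_const (u p.1))).congr_deriv (by module)
  have hX : HasDerivAt (fun s => p.1 + (s - t) • eulerVelocity ε (s - t) u p)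
      (eulerVelocity ε (s - t) u p - (s - t) • ε⁻¹ • (p.2 + u p.1)) s :=
    ((hh.smul hV).const_add p.1).congr_deriv (by module)
  have hpath := (hasDerivAt_id s).prodMk (hX.prodMk hV)
  exact hJ.mul ((hf _).hasFDerivAt.comp_hasDerivAt s hpath)

lemma eulerPullbackDeriv_self_eq_zero {ε : ℝ} {u : E → E} {f : ℝ × E × E → ℝ} {t : ℝ} {p : E × E}
    (heqn : fderiv ℝ f (t, p) (1, p.2, 0) =
      ε⁻¹ * (Module.finrank ℝ E * f (t, p) + fderiv ℝ f (t, p) (0, 0, p.2 + u p.1))) :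
    eulerPullbackDeriv ε u f t t p = 0 := by
  have hdir : ((1, p.2, -(ε⁻¹ • (p.2 + u p.1))) : ℝ × E × E) =
      (1, p.2, 0) - ε⁻¹ • (0, 0, p.2 + u p.1) := by simp
  simp only [eulerPullbackDeriv, sub_self, eulerStep_zero, zero_smul, zero_div, sub_zero, one_pow,
    mul_one, one_mul]
  rw [show eulerVelocity ε 0 u p = p.2 by simp [eulerVelocity], hdir, map_sub, map_smul, heqn,
    smul_eq_mul]
  ring

lemma continuous_eulerPullbackDeriv {f : ℝ × E × E → ℝ} (hf : ContDiff ℝ 1 f) {u : E → E}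
    (hu : Continuous u) (ε t : ℝ) :
    Continuous (Function.uncurry (eulerPullbackDeriv ε u f t)) := by
  have hf₀ := hf.continuous
  unfold eulerPullbackDeriv eulerVelocity Function.uncurry
  fun_prop

lemma eventually_eulerPullback_sub_eq_zero {ε t T R U : ℝ} (hε : 0 < ε) (htT : t < T) {u : E → E}
    (hU : ∀ x, ‖u x‖ ≤ U) {f : ℝ × E × E → ℝ}
    (hsupp : ∀ s ∈ Icc t T, ∀ p, R < ‖p‖ → f (s, p) = 0) :
    ∀ᶠ s in 𝓝[≥] t, ∀ p, 2 * R + U < ‖p‖ → eulerPullback ε u f t s p - f (t, p) = 0 := by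
  have hnear : ∀ᶠ s in 𝓝[≥] t, s < min T (min (t + 1) (t + ε / 2)) :=
    mem_nhdsWithin_of_mem_nhds (Iio_mem_nhds (by simp [htT, hε]))
  filter_upwards [hnear, self_mem_nhdsWithin] with s hs hts p hp
  simp only [lt_min_iff] at hs
  have hts : t ≤ s := hts
  have hstep : R < ‖eulerStep ε (s - t) u p‖ := by
    linarith [hU p.1, norm_le_norm_eulerStep (sub_nonneg.2 hts) (by linarith) hε (by linarith) u p]
  have hpR : R < ‖p‖ := by
    by_contra! hle
    linarith [hU p.1, norm_nonneg (u p.1), norm_nonneg p]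
  rw [eulerPullback, hsupp s ⟨hts, hs.1.le⟩ _ hstep, hsupp t ⟨le_rfl, htT.le⟩ p hpR]
  simp

end FirstOrder

section Transport

variable {E : Type*} [NormedAddCommGroup E] [NormedSpace ℝ E] [FiniteDimensional ℝ E]
  [MeasureSpace E] [(volume : Measure E).IsAddHaarMeasure]

/-- The weighted `L¹` error made when `f` is transported from time `t` to time `s` by a single
Euler step. The weight allows test functions of linear growth. -/
noncomputable def transportDefect (ε : ℝ) (u : E → E) (f : ℝ × E × E → ℝ) (t s : ℝ) : ℝ :=
  ∫ p, |eulerPullback ε u f t s p - f (t, p)| * (1 + ‖eulerStep ε (s - t) u p‖)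

lemma isLittleO_transportDefect {ε t T R U : ℝ} (hε : 0 < ε) (htT : t < T) {u : E → E}
    (hu : Continuous u) (hU : ∀ x, ‖u x‖ ≤ U) {f : ℝ × E × E → ℝ} (hf : ContDiff ℝ 1 f)
    (hsupp : ∀ s ∈ Icc t T, ∀ p, R < ‖p‖ → f (s, p) = 0)
    (heqn : ∀ p : E × E, fderiv ℝ f (t, p) (1, p.2, 0) =
      ε⁻¹ * (Module.finrank ℝ E * f (t, p) + fderiv ℝ f (t, p) (0, 0, p.2 + u p.1))) :
    transportDefect ε u f t =o[𝓝[≥] t] (· - t) := by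
  set r := 2 * R + U
  set m := (volume : Measure (E × E)).real (Metric.closedBall 0 r)
  set w := 1 + (2 * r + 2 * U)
  refine Asymptotics.isLittleO_iff.2 fun c hc => ?_
  obtain ⟨δ, hδ, hδc⟩ := exists_pos_mul_lt hc (w * m)
  have hfirst : ∀ᶠ s in 𝓝 t, ∀ p ∈ Metric.closedBall 0 r,
      ‖eulerPullback ε u f t s p - eulerPullback ε u f t t p‖ ≤ δ * ‖s - t‖ :=
    eventually_norm_sub_le_of_hasDerivAt_eq_zero
      (fun s p _ => hasDerivAt_eulerPullback (hf.differentiable one_ne_zero) ε u t s p)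
      (continuous_eulerPullbackDeriv hf hu ε t) (isCompact_closedBall 0 r)
      (fun p _ => eulerPullbackDeriv_self_eq_zero (heqn p)) hδ
  have hnear : ∀ᶠ s in 𝓝 t, s < min (t + 1) (t + ε) := Iio_mem_nhds (by simp [hε])
  filter_upwards [hfirst.filter_mono nhdsWithin_le_nhds, hnear.filter_mono nhdsWithin_le_nhds,
    eventually_eulerPullback_sub_eq_zero hε htT hU hsupp, self_mem_nhdsWithin]
    with s hfirst hs hout hts
  simp only [lt_min_iff, mem_Ici] at hs hts
  have hball : ∀ p ∈ Metric.closedBall 0 r,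
      ‖|eulerPullback ε u f t s p - f (t, p)| * (1 + ‖eulerStep ε (s - t) u p‖)‖ ≤
        δ * ‖s - t‖ * w := by
    intro p hp
    have hstep := norm_eulerStep_le (ε := ε) (sub_nonneg.2 hts) (by linarith) (by linarith) u p
    have hpr : ‖p‖ ≤ r := mem_closedBall_zero_iff.1 hp
    have hdiff := hfirst p hp
    rw [eulerPullback_self] at hdiff
    rw [norm_mul, norm_abs_eq_norm, Real.norm_of_nonneg (by positivity : 0 ≤ 1 + ‖_‖)]
    exact mul_le_mul hdiff (by linarith [hU p.1]) (by positivity) (by positivity)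
  calc ‖transportDefect ε u f t s‖
      = ‖∫ p in Metric.closedBall 0 r,
          |eulerPullback ε u f t s p - f (t, p)| * (1 + ‖eulerStep ε (s - t) u p‖)‖ := by
        rw [transportDefect, setIntegral_eq_integral_of_forall_compl_eq_zero fun p hp => by
          rw [hout p (by simpa using hp), abs_zero, zero_mul]]
    _ ≤ δ * ‖s - t‖ * w * m :=
        norm_setIntegral_le_of_norm_le_const (isCompact_closedBall 0 r).measure_lt_top hball
    _ = w * m * δ * ‖s - t‖ := by ring
    _ ≤ c * ‖s - t‖ := by gcongr

variable [BorelSpace E]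

lemma integrable_eulerPullback_smul {ε t s : ℝ} (hε : (s - t) / ε ≠ 1) {u : E → E}
    (hu : Measurable u) {f : ℝ × E × E → ℝ} {F : Type*} [NormedAddCommGroup F] [NormedSpace ℝ F]
    {φ : E × E → F} (hφ : Integrable fun p => f (s, p) • φ p) :
    Integrable fun p => eulerPullback ε u f t s p • φ (eulerStep ε (s - t) u p) := by
  simp only [eulerPullback, mul_smul]
  exact (integrable_comp_eulerStep hε hu hφ).smul ((1 - (s - t) / ε) ^ Module.finrank ℝ E)

lemma integral_eulerPullback_smul {ε t s : ℝ} (hε : (s - t) / ε < 1) {u : E → E}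
    (hu : Measurable u) {f : ℝ × E × E → ℝ} {F : Type*} [NormedAddCommGroup F] [NormedSpace ℝ F]
    {φ : E × E → F} (hφ : AEStronglyMeasurable fun p => f (s, p) • φ p) :
    ∫ p, eulerPullback ε u f t s p • φ (eulerStep ε (s - t) u p) = ∫ p, f (s, p) • φ p := by
  simp only [eulerPullback, mul_smul]
  exact integral_eulerStep hε hu hφ

lemma norm_integral_smul_sub_le_transportDefect {ε t s : ℝ} (hε : 0 < ε) (hs : s < t + ε)
    {u : E → E} (hu : Continuous u) {f : ℝ × E × E → ℝ}
    (hft : Continuous fun p => f (t, p)) (hft' : HasCompactSupport fun p => f (t, p))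
    (hfs : Continuous fun p => f (s, p)) (hfs' : HasCompactSupport fun p => f (s, p))
    {F : Type*} [NormedAddCommGroup F] [NormedSpace ℝ F] {φ : E × E → F} {C : ℝ}
    (hφ : Continuous φ) (hC : ∀ q, ‖φ q‖ ≤ C * (1 + ‖q‖)) :
    ‖(∫ p, f (s, p) • φ p) - ∫ p, f (t, p) • φ (eulerStep ε (s - t) u p)‖ ≤
      C * transportDefect ε u f t s := by
  have hk : (s - t) / ε < 1 := by rw [div_lt_one hε]; linarith
  have hΦ : Continuous (eulerStep ε (s - t) u) := by fun_prop
  have hw : Continuous fun q : E × E => 1 + ‖q‖ := by fun_prop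
  have hφs : Integrable fun p => f (s, p) • φ p :=
    (hfs.smul hφ).integrable_of_hasCompactSupport hfs'.smul_right
  have hφt : Integrable fun p => f (t, p) • φ (eulerStep ε (s - t) u p) :=
    (hft.smul (hφ.comp hΦ)).integrable_of_hasCompactSupport hft'.smul_right
  have hws : Integrable fun p => f (s, p) • (1 + ‖p‖) :=
    (hfs.smul hw).integrable_of_hasCompactSupport hfs'.smul_right
  have hwt : Integrable fun p => f (t, p) • (1 + ‖eulerStep ε (s - t) u p‖) :=
    (hft.smul (hw.comp hΦ)).integrable_of_hasCompactSupport hft'.smul_right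
  have hdefect : Integrable fun p =>
      |eulerPullback ε u f t s p - f (t, p)| * (1 + ‖eulerStep ε (s - t) u p‖) := by
    refine ((integrable_eulerPullback_smul hk.ne hu.measurable hws).sub hwt).abs.congr
      (.of_forall fun p => ?_)
    simp only [Pi.sub_apply, smul_eq_mul]
    rw [← sub_mul, abs_mul, abs_of_pos (a := 1 + _) (by positivity)]
  rw [← integral_eulerPullback_smul (t := t) hk hu.measurable hφs.aestronglyMeasurable,
    ← integral_sub (integrable_eulerPullback_smul hk.ne hu.measurable hφs) hφt, transportDefect,
    ← integral_const_mul]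
  refine norm_integral_le_of_norm_le (hdefect.const_mul C) (.of_forall fun p => ?_)
  rw [← sub_smul, norm_smul, mul_left_comm]
  exact mul_le_mul_of_nonneg_left (hC _) (norm_nonneg _)

end Transport

/-- The total mass `∫∫ f dx dv` of a phase-space density at time `t`. -/
noncomputable def kinMass (f : ℝ × EuclideanSpace ℝ (Fin d) × EuclideanSpace ℝ (Fin d) → ℝ)
    (t : ℝ) : ℝ :=
  ∫ p, f (t, p)

section Field

variable {gradK : EuclideanSpace ℝ (Fin d) → EuclideanSpace ℝ (Fin d)}
  {f : ℝ × EuclideanSpace ℝ (Fin d) × EuclideanSpace ℝ (Fin d) → ℝ} {A t : ℝ} {L : NNReal}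

lemma kinMass_le_integral_weight
    (hpos : ∀ p, 0 ≤ f (t, p))
    (hf : Integrable fun p : EuclideanSpace ℝ (Fin d) × EuclideanSpace ℝ (Fin d) =>
      (1 + ‖p.2‖) * f (t, p.1, p.2)) :
    kinMass f t ≤ ∫ p : EuclideanSpace ℝ (Fin d) × EuclideanSpace ℝ (Fin d),
      (1 + ‖p.2‖) * f (t, p.1, p.2) :=
  integral_mono_of_nonneg (.of_forall hpos) hf
    (.of_forall fun p => le_mul_of_one_le_left (hpos p) (by simp))

lemma norm_integral_smul_le_kinMass_mul {F : Type*} [NormedAddCommGroup F] [NormedSpace ℝ F]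
    (hf : Integrable fun p => f (t, p)) (hpos : ∀ p, 0 ≤ f (t, p))
    {φ : EuclideanSpace ℝ (Fin d) × EuclideanSpace ℝ (Fin d) → F} {C : ℝ} (hφ : ∀ p, ‖φ p‖ ≤ C) :
    ‖∫ p, f (t, p) • φ p‖ ≤ kinMass f t * C := by
  rw [kinMass, ← integral_mul_const]
  refine norm_integral_le_of_norm_le (hf.mul_const C) (.of_forall fun p => ?_)
  rw [norm_smul, Real.norm_of_nonneg (hpos p)]
  exact mul_le_mul_of_nonneg_left (hφ p) (hpos p)

lemma integrable_smul_kernel (hf : Integrable fun p => f (t, p)) (hA : ∀ z, ‖gradK z‖ ≤ A)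
    (hK : Continuous gradK) (x : EuclideanSpace ℝ (Fin d)) :
    Integrable fun p => f (t, p) • gradK (x - p.1) :=
  hf.smul_bdd A (Continuous.aestronglyMeasurable (by fun_prop)) (.of_forall fun p => hA _)

lemma kinField_eq_integral_prod (hf : Integrable fun p => f (t, p)) (hA : ∀ z, ‖gradK z‖ ≤ A)
    (hK : Continuous gradK) (x : EuclideanSpace ℝ (Fin d)) :
    kinField gradK f t x = ∫ p, f (t, p) • gradK (x - p.1) := by
  rw [Measure.volume_eq_prod, integral_prod _ (integrable_smul_kernel hf hA hK x)]
  simp only [kinField, kinDensity, integral_smul_const]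

lemma norm_kinField_le (hf : Integrable fun p => f (t, p)) (hpos : ∀ p, 0 ≤ f (t, p))
    (hA : ∀ z, ‖gradK z‖ ≤ A) (hK : Continuous gradK) (x : EuclideanSpace ℝ (Fin d)) :
    ‖kinField gradK f t x‖ ≤ kinMass f t * A := by
  rw [kinField_eq_integral_prod hf hA hK]
  exact norm_integral_smul_le_kinMass_mul hf hpos fun p => hA _

lemma norm_kinField_sub_le (hf : Integrable fun p => f (t, p)) (hpos : ∀ p, 0 ≤ f (t, p))
    (hA : ∀ z, ‖gradK z‖ ≤ A) (hL : LipschitzWith L gradK) (x y : EuclideanSpace ℝ (Fin d)) :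
    ‖kinField gradK f t x - kinField gradK f t y‖ ≤ kinMass f t * (L * ‖x - y‖) := by
  rw [kinField_eq_integral_prod hf hA hL.continuous, kinField_eq_integral_prod hf hA hL.continuous,
    ← integral_sub (integrable_smul_kernel hf hA hL.continuous x)
      (integrable_smul_kernel hf hA hL.continuous y)]
  simp only [← smul_sub]
  exact norm_integral_smul_le_kinMass_mul hf hpos fun p => by
    simpa using hL.norm_sub_le (x - p.1) (y - p.1)

lemma kinMoment_eq_integral_smul (gradK : EuclideanSpace ℝ (Fin d) → EuclideanSpace ℝ (Fin d))
    (f : ℝ × EuclideanSpace ℝ (Fin d) × EuclideanSpace ℝ (Fin d) → ℝ) (t : ℝ) :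
    kinMoment gradK f t = ∫ p, f (t, p) • ‖p.2 + kinField gradK f t p.1‖ := by
  simp only [kinMoment, smul_eq_mul, mul_comm]

end Field

/-- Nonnegative `C¹` classical solutions of the kinetic aggregation equation with inertia `ε` on
`[0, T]`, compactly supported in phase space uniformly in time. The divergence in the equation is
expanded, so that it only involves directional derivatives of `f`. -/
structure IsKineticSolution (gradK : EuclideanSpace ℝ (Fin d) → EuclideanSpace ℝ (Fin d))
    (ε T : ℝ) (f : ℝ × EuclideanSpace ℝ (Fin d) × EuclideanSpace ℝ (Fin d) → ℝ) : Prop where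
  inertia_pos : 0 < ε
  contDiff : ContDiff ℝ 1 f
  nonneg : ∀ t ∈ Icc 0 T, ∀ p, 0 ≤ f (t, p)
  exists_support_bound : ∃ R, ∀ t ∈ Icc 0 T, ∀ p, R < ‖p‖ → f (t, p) = 0
  equation : ∀ t ∈ Icc 0 T, ∀ x v, fderiv ℝ f (t, x, v) (1, v, 0) =
    ε⁻¹ * (d * f (t, x, v) + fderiv ℝ f (t, x, v) (0, 0, v + kinField gradK f t x))

namespace IsKineticSolution

variable {gradK : EuclideanSpace ℝ (Fin d) → EuclideanSpace ℝ (Fin d)}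
  {f : ℝ × EuclideanSpace ℝ (Fin d) × EuclideanSpace ℝ (Fin d) → ℝ} {A ε T s t : ℝ} {L : NNReal}

lemma continuous_slice (S : IsKineticSolution gradK ε T f) (t : ℝ) :
    Continuous fun p => f (t, p) :=
  S.contDiff.continuous.comp (by fun_prop)

lemma hasCompactSupport_slice (S : IsKineticSolution gradK ε T f) (ht : t ∈ Icc 0 T) :
    HasCompactSupport fun p => f (t, p) := by
  obtain ⟨R, hR⟩ := S.exists_support_bound
  exact .intro (isCompact_closedBall 0 R) fun p hp => hR t ht p (by simpa using hp)

lemma integrable_smul (S : IsKineticSolution gradK ε T f) (ht : t ∈ Icc 0 T) {F : Type*}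
    [NormedAddCommGroup F] [NormedSpace ℝ F]
    {φ : EuclideanSpace ℝ (Fin d) × EuclideanSpace ℝ (Fin d) → F} (hφ : Continuous φ) :
    Integrable fun p => f (t, p) • φ p :=
  ((S.continuous_slice t).smul hφ).integrable_of_hasCompactSupport
    (S.hasCompactSupport_slice ht).smul_right

lemma integrable_slice (S : IsKineticSolution gradK ε T f) (ht : t ∈ Icc 0 T) :
    Integrable fun p => f (t, p) :=
  (S.continuous_slice t).integrable_of_hasCompactSupport (S.hasCompactSupport_slice ht)

lemma kinMass_nonneg (S : IsKineticSolution gradK ε T f) (ht : t ∈ Icc 0 T) : 0 ≤ kinMass f t :=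
  integral_nonneg (S.nonneg t ht)

lemma kinMoment_nonneg (S : IsKineticSolution gradK ε T f) (ht : t ∈ Icc 0 T) :
    0 ≤ kinMoment gradK f t :=
  integral_nonneg fun p => mul_nonneg (norm_nonneg _) (S.nonneg t ht p)

lemma continuousOn_integral_smul (S : IsKineticSolution gradK ε T f) {X F : Type*}
    [TopologicalSpace X] [NormedAddCommGroup F] [NormedSpace ℝ F] {τ : X → ℝ} {Y : Set X}
    {φ : X → EuclideanSpace ℝ (Fin d) × EuclideanSpace ℝ (Fin d) → F} (hτ : ContinuousOn τ Y)
    (hτY : MapsTo τ Y (Icc 0 T)) (hφ : ContinuousOn (Function.uncurry φ) (Y ×ˢ univ)) :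
    ContinuousOn (fun x => ∫ p, f (τ x, p) • φ x p) Y := by
  obtain ⟨R, hR⟩ := S.exists_support_bound
  refine continuousOn_integral_of_compact_support (isCompact_closedBall 0 R) (.smul ?_ hφ)
    fun x p hx hp => by rw [hR _ (hτY hx) p (by simpa using hp), zero_smul]
  exact S.contDiff.continuous.comp_continuousOn
    ((hτ.comp continuousOn_fst fun q hq => hq.1).prodMk continuousOn_snd)

lemma continuousOn_kinMass (S : IsKineticSolution gradK ε T f) :
    ContinuousOn (kinMass f) (Icc 0 T) :=
  (S.continuousOn_integral_smul continuousOn_id (mapsTo_id _) (φ := fun _ _ => (1 : ℝ))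
    continuousOn_const).congr fun t _ => by simp [kinMass]

lemma continuousOn_kinField (S : IsKineticSolution gradK ε T f) (hA : ∀ z, ‖gradK z‖ ≤ A)
    (hK : Continuous gradK) :
    ContinuousOn (Function.uncurry (kinField gradK f)) (Icc 0 T ×ˢ univ) :=
  (S.continuousOn_integral_smul (τ := Prod.fst) (φ := fun q p => gradK (q.2 - p.1))
    continuousOn_fst (fun q hq => hq.1) (Continuous.continuousOn (by fun_prop))).congr
    fun q hq => kinField_eq_integral_prod (S.integrable_slice hq.1) hA hK q.2

lemma continuous_kinField (S : IsKineticSolution gradK ε T f) (hA : ∀ z, ‖gradK z‖ ≤ A)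
    (hK : Continuous gradK) (ht : t ∈ Icc 0 T) : Continuous (kinField gradK f t) :=
  (S.continuousOn_kinField hA hK).comp_continuous (f := fun x => (t, x)) (by fun_prop)
    fun _ => ⟨ht, mem_univ _⟩

lemma continuousOn_kinMoment (S : IsKineticSolution gradK ε T f) (hA : ∀ z, ‖gradK z‖ ≤ A)
    (hK : Continuous gradK) : ContinuousOn (kinMoment gradK f) (Icc 0 T) := by
  have hfield : ContinuousOn
      (fun q : ℝ × EuclideanSpace ℝ (Fin d) × EuclideanSpace ℝ (Fin d) =>
        kinField gradK f q.1 q.2.1) (Icc 0 T ×ˢ univ) :=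
    (S.continuousOn_kinField hA hK).comp
      (f := fun q : ℝ × EuclideanSpace ℝ (Fin d) × EuclideanSpace ℝ (Fin d) => (q.1, q.2.1))
      (by fun_prop) fun q hq => ⟨hq.1, mem_univ _⟩
  refine (S.continuousOn_integral_smul continuousOn_id (mapsTo_id _)
    (φ := fun t p => ‖p.2 + kinField gradK f t p.1‖) ?_).congr
    fun t _ => kinMoment_eq_integral_smul gradK f t
  exact (ContinuousOn.add (by fun_prop) hfield).norm

lemma isLittleO_transportDefect (S : IsKineticSolution gradK ε T f) (hA : ∀ z, ‖gradK z‖ ≤ A)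
    (hK : Continuous gradK) (ht : t ∈ Ico 0 T) :
    transportDefect ε (kinField gradK f t) f t =o[𝓝[≥] t] (· - t) := by
  have ht' : t ∈ Icc 0 T := Ico_subset_Icc_self ht
  obtain ⟨R, hR⟩ := S.exists_support_bound
  refine _root_.isLittleO_transportDefect S.inertia_pos ht.2 (S.continuous_kinField hA hK ht')
    (norm_kinField_le (S.integrable_slice ht') (S.nonneg t ht') hA hK) S.contDiff
    (fun s hs => hR s ⟨ht.1.trans hs.1, hs.2⟩) fun p => ?_
  simpa using S.equation t ht' p.1 p.2

lemma norm_integral_smul_sub_le (S : IsKineticSolution gradK ε T f) (hA : ∀ z, ‖gradK z‖ ≤ A)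
    (hK : Continuous gradK) (ht : t ∈ Icc 0 T) (hs : s ∈ Icc 0 T) (hst : s < t + ε) {F : Type*}
    [NormedAddCommGroup F] [NormedSpace ℝ F]
    {φ : EuclideanSpace ℝ (Fin d) × EuclideanSpace ℝ (Fin d) → F} {C : ℝ} (hφ : Continuous φ)
    (hC : ∀ q, ‖φ q‖ ≤ C * (1 + ‖q‖)) :
    ‖(∫ p, f (s, p) • φ p) -
        ∫ p, f (t, p) • φ (eulerStep ε (s - t) (kinField gradK f t) p)‖ ≤
      C * transportDefect ε (kinField gradK f t) f t s :=
  norm_integral_smul_sub_le_transportDefect S.inertia_pos hst (S.continuous_kinField hA hK ht)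
    (S.continuous_slice t) (S.hasCompactSupport_slice ht) (S.continuous_slice s)
    (S.hasCompactSupport_slice hs) hφ hC

lemma kinMass_eq (S : IsKineticSolution gradK ε T f) (hA : ∀ z, ‖gradK z‖ ≤ A)
    (hK : Continuous gradK) (ht : t ∈ Icc 0 T) : kinMass f t = kinMass f 0 := by
  refine constant_of_has_deriv_right_zero S.continuousOn_kinMass (fun t ht => ?_) t ht
  have ht' : t ∈ Icc 0 T := Ico_subset_Icc_self ht
  have hdefect : ∀ᶠ s in 𝓝[≥] t, ‖kinMass f s - kinMass f t‖ ≤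
      1 * ‖transportDefect ε (kinField gradK f t) f t s‖ := by
    have hnear : ∀ᶠ s in 𝓝[≥] t, s < min T (t + ε) :=
      mem_nhdsWithin_of_mem_nhds (Iio_mem_nhds (by simp [ht.2, S.inertia_pos]))
    filter_upwards [hnear, self_mem_nhdsWithin] with s hs hts
    rw [lt_min_iff] at hs
    have h := S.norm_integral_smul_sub_le hA hK ht' ⟨ht.1.trans hts, hs.1.le⟩ hs.2
      (φ := fun _ => (1 : ℝ)) (C := 1) continuous_const (by simp)
    simp only [smul_eq_mul, mul_one] at h
    exact h.trans (by gcongr; exact le_abs_self _)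
  rw [hasDerivWithinAt_iff_isLittleO]
  simpa using (Asymptotics.IsBigO.of_bound 1 hdefect).trans_isLittleO
    (S.isLittleO_transportDefect hA hK ht)

lemma integral_smul_norm_add_const (S : IsKineticSolution gradK ε T f) (hA : ∀ z, ‖gradK z‖ ≤ A)
    (hK : Continuous gradK) (ht : t ∈ Icc 0 T) (C : ℝ) :
    ∫ p, f (t, p) • (‖p.2 + kinField gradK f t p.1‖ + C) =
      kinMoment gradK f t + kinMass f t * C := by
  have hu := S.continuous_kinField hA hK ht
  simp only [smul_add]
  rw [integral_add (S.integrable_smul ht (by fun_prop)) (S.integrable_smul ht continuous_const),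
    integral_smul_const, ← kinMoment_eq_integral_smul, kinMass, smul_eq_mul]

lemma integral_smul_displacement_le (S : IsKineticSolution gradK ε T f)
    (hA : ∀ z, ‖gradK z‖ ≤ A) (hK : Continuous gradK) (ht : t ∈ Icc 0 T) (hts : t ≤ s)
    (hst : s < t + ε) :
    ∫ p, f (t, p) • ‖(eulerStep ε (s - t) (kinField gradK f t) p).1 - p.1‖ ≤
      (s - t) * (kinMoment gradK f t + A * kinMass f t ^ 2) := by
  have hu := S.continuous_kinField hA hK ht
  have hΦ : Continuous (eulerStep ε (s - t) (kinField gradK f t)) := by fun_prop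
  calc ∫ p, f (t, p) • ‖(eulerStep ε (s - t) (kinField gradK f t) p).1 - p.1‖
      ≤ ∫ p, f (t, p) •
          ((s - t) * (‖p.2 + kinField gradK f t p.1‖ + kinMass f t * A)) := by
        refine integral_mono (S.integrable_smul ht (hΦ.fst.sub continuous_fst).norm)
          (S.integrable_smul ht (by fun_prop)) fun p =>
            mul_le_mul_of_nonneg_left ?_ (S.nonneg t ht p)
        refine (norm_eulerStep_fst_sub_le (sub_nonneg.2 hts) (by linarith) _ p).trans ?_
        have := sub_nonneg.2 hts
        gcongr
        exact norm_kinField_le (S.integrable_slice ht) (S.nonneg t ht) hA hK _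
    _ = (s - t) * (kinMoment gradK f t + A * kinMass f t ^ 2) := by
        simp only [smul_eq_mul, mul_left_comm (f _)]
        rw [integral_const_mul]
        simp only [← smul_eq_mul (f _), S.integral_smul_norm_add_const hA hK ht]
        ring

lemma norm_kinField_sub_kinField_le (S : IsKineticSolution gradK ε T f)
    (hA : ∀ z, ‖gradK z‖ ≤ A) (hL : LipschitzWith L gradK) (ht : t ∈ Icc 0 T)
    (hs : s ∈ Icc 0 T) (hts : t ≤ s) (hst : s < t + ε) (z : EuclideanSpace ℝ (Fin d)) :
    ‖kinField gradK f s z - kinField gradK f t z‖ ≤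
      A * transportDefect ε (kinField gradK f t) f t s +
        L * ((s - t) * (kinMoment gradK f t + A * kinMass f t ^ 2)) := by
  have hK := hL.continuous
  have hu := S.continuous_kinField hA hK ht
  have hkernel : Continuous
      fun p : EuclideanSpace ℝ (Fin d) × EuclideanSpace ℝ (Fin d) => gradK (z - p.1) := by fun_prop
  set Φ := eulerStep ε (s - t) (kinField gradK f t)
  have hΦ : Continuous Φ := by fun_prop
  have htransport : ‖(∫ p, f (s, p) • gradK (z - p.1)) - ∫ p, f (t, p) • gradK (z - (Φ p).1)‖ ≤
      A * transportDefect ε (kinField gradK f t) f t s :=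
    S.norm_integral_smul_sub_le hA hK ht hs hst hkernel fun q =>
      (hA _).trans (le_mul_of_one_le_right ((norm_nonneg _).trans (hA 0)) (by simp))
  have hdisplace : ‖(∫ p, f (t, p) • gradK (z - (Φ p).1)) - ∫ p, f (t, p) • gradK (z - p.1)‖ ≤
      L * ∫ p, f (t, p) • ‖(Φ p).1 - p.1‖ := by
    rw [← integral_sub (S.integrable_smul ht (by fun_prop)) (S.integrable_smul ht hkernel),
      ← integral_const_mul]
    refine norm_integral_le_of_norm_le
      ((S.integrable_smul ht (by fun_prop)).const_mul _) (.of_forall fun p => ?_)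
    rw [← smul_sub, norm_smul, Real.norm_of_nonneg (S.nonneg t ht p), smul_eq_mul, mul_left_comm]
    refine mul_le_mul_of_nonneg_left ?_ (S.nonneg t ht p)
    simpa [norm_sub_rev] using hL.norm_sub_le (z - (Φ p).1) (z - p.1)
  rw [kinField_eq_integral_prod (S.integrable_slice hs) hA hK,
    kinField_eq_integral_prod (S.integrable_slice ht) hA hK]
  refine (norm_sub_le_norm_sub_add_norm_sub _ _ _).trans (add_le_add htransport ?_)
  exact hdisplace.trans
    (mul_le_mul_of_nonneg_left (S.integral_smul_displacement_le hA hK ht hts hst) L.coe_nonneg)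

lemma integral_smul_norm_eulerStep_le (S : IsKineticSolution gradK ε T f)
    (hA : ∀ z, ‖gradK z‖ ≤ A) (hL : LipschitzWith L gradK) (ht : t ∈ Icc 0 T)
    (hst : s < t + ε) {w : EuclideanSpace ℝ (Fin d) → EuclideanSpace ℝ (Fin d)}
    (hw : Continuous w) {D : ℝ} (hD : ∀ x, ‖w x - kinField gradK f t x‖ ≤ D) :
    ∫ p, f (t, p) • ‖(eulerStep ε (s - t) (kinField gradK f t) p).2 +
        w (eulerStep ε (s - t) (kinField gradK f t) p).1‖ ≤
      (1 - (s - t) / ε) * kinMoment gradK f t + kinMass f t * L *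
        (∫ p, f (t, p) • ‖(eulerStep ε (s - t) (kinField gradK f t) p).1 - p.1‖) +
          kinMass f t * D := by
  have hu := S.continuous_kinField hA hL.continuous ht
  set Φ := eulerStep ε (s - t) (kinField gradK f t)
  have hΦ : Continuous Φ := by fun_prop
  have hk : (s - t) / ε ≤ 1 := div_le_one_of_le₀ (by linarith) S.inertia_pos.le
  have hrelax : Integrable fun p => f (t, p) • ‖p.2 + kinField gradK f t p.1‖ :=
    S.integrable_smul ht (by fun_prop)
  have hmove : Integrable fun p => f (t, p) • ‖(Φ p).1 - p.1‖ :=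
    S.integrable_smul ht (by fun_prop)
  have hsum : Integrable fun p =>
      (1 - (s - t) / ε) * (f (t, p) • ‖p.2 + kinField gradK f t p.1‖) +
        kinMass f t * L * (f (t, p) • ‖(Φ p).1 - p.1‖) :=
    (hrelax.const_mul _).add (hmove.const_mul _)
  have hmass := S.integrable_slice ht
  calc ∫ p, f (t, p) • ‖(Φ p).2 + w (Φ p).1‖
      ≤ ∫ p, ((1 - (s - t) / ε) * (f (t, p) • ‖p.2 + kinField gradK f t p.1‖) +
          kinMass f t * L * (f (t, p) • ‖(Φ p).1 - p.1‖) + f (t, p) * D) := by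
        refine integral_mono (S.integrable_smul ht (by fun_prop))
          (hsum.add (hmass.mul_const D)) fun p => ?_
        have hstep := norm_eulerStep_snd_add_le hk (kinField gradK f t) w p
        have hspace := norm_kinField_sub_le hmass (S.nonneg t ht) hA hL (Φ p).1 p.1
        have hpoint : ‖(Φ p).2 + w (Φ p).1‖ ≤ (1 - (s - t) / ε) * ‖p.2 + kinField gradK f t p.1‖ +
            kinMass f t * (L * ‖(Φ p).1 - p.1‖) + D :=
          hstep.trans (add_le_add (by gcongr) (hD _))
        refine (mul_le_mul_of_nonneg_left hpoint (S.nonneg t ht p)).trans_eq ?_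
        simp only [smul_eq_mul]
        ring
    _ = _ := by
        rw [integral_add hsum (hmass.mul_const D),
          integral_add (hrelax.const_mul _) (hmove.const_mul _), integral_const_mul,
          integral_const_mul, integral_mul_const, ← kinMoment_eq_integral_smul, kinMass]

lemma kinMoment_sub_le (S : IsKineticSolution gradK ε T f) (hA : ∀ z, ‖gradK z‖ ≤ A)
    (hL : LipschitzWith L gradK) (ht : t ∈ Icc 0 T) (hs : s ∈ Icc 0 T) (hts : t ≤ s)
    (hst : s < t + ε) :
    kinMoment gradK f s - kinMoment gradK f t ≤
      (s - t) * (-kinMoment gradK f t / ε +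
          2 * L * kinMass f t * (kinMoment gradK f t + A * kinMass f t ^ 2)) +
        (1 + 2 * (kinMass f t * A)) * transportDefect ε (kinField gradK f t) f t s := by
  have hK := hL.continuous
  have hM : kinMass f s = kinMass f t := by rw [S.kinMass_eq hA hK hs, S.kinMass_eq hA hK ht]
  have hus := S.continuous_kinField hA hK hs
  have htest : ∀ q : EuclideanSpace ℝ (Fin d) × EuclideanSpace ℝ (Fin d),
      ‖‖q.2 + kinField gradK f s q.1‖‖ ≤ (1 + kinMass f t * A) * (1 + ‖q‖) := by
    intro q
    have hU := norm_kinField_le (S.integrable_slice hs) (S.nonneg s hs) hA hK q.1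
    rw [hM] at hU
    rw [norm_norm]
    nlinarith [norm_add_le q.2 (kinField gradK f s q.1), norm_snd_le q, norm_nonneg q,
      norm_nonneg (kinField gradK f s q.1)]
  have htransport := (le_abs_self _).trans
    (S.norm_integral_smul_sub_le hA hK ht hs hst (by fun_prop) htest)
  rw [← kinMoment_eq_integral_smul] at htransport
  have hstep := S.integral_smul_norm_eulerStep_le hA hL ht hst hus
    (S.norm_kinField_sub_kinField_le hA hL ht hs hts hst)
  have hmove := mul_le_mul_of_nonneg_left (S.integral_smul_displacement_le hA hK ht hts hst)
    (mul_nonneg (S.kinMass_nonneg ht) L.coe_nonneg)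
  linear_combination htransport + hstep + hmove

lemma eventually_slope_kinMoment_lt (S : IsKineticSolution gradK ε T f)
    (hA : ∀ z, ‖gradK z‖ ≤ A) (hL : LipschitzWith L gradK) (ht : t ∈ Ico 0 T) {r : ℝ}
    (hr : -kinMoment gradK f t / ε +
      2 * L * kinMass f t * (kinMoment gradK f t + A * kinMass f t ^ 2) < r) :
    ∀ᶠ s in 𝓝[>] t, (s - t)⁻¹ * (kinMoment gradK f s - kinMoment gradK f t) < r := by
  have ht' : t ∈ Icc 0 T := Ico_subset_Icc_self ht
  have hnear : ∀ᶠ s in 𝓝[>] t, s < min T (t + ε) :=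
    mem_nhdsWithin_of_mem_nhds (Iio_mem_nhds (by simp [ht.2, S.inertia_pos]))
  have hdefect := ((S.isLittleO_transportDefect hA hL.continuous ht).mono
    (nhdsWithin_mono t Ioi_subset_Ici_self)).const_mul_left (1 + 2 * (kinMass f t * A))
  filter_upwards [hnear, hdefect.def (half_pos (sub_pos.2 hr)), self_mem_nhdsWithin]
    with s hs hsmall hts
  rw [lt_min_iff] at hs
  have hpos : 0 < s - t := sub_pos.2 hts
  have hstep := S.kinMoment_sub_le hA hL ht' ⟨ht.1.trans hts.le, hs.1.le⟩ hts.le hs.2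
  rw [Real.norm_of_nonneg hpos.le] at hsmall
  rw [inv_mul_lt_iff₀ hpos]
  nlinarith [le_of_abs_le hsmall, mul_pos hpos (sub_pos.2 hr)]

end IsKineticSolution

theorem kinetic_moment_estimate_smooth_general
    {gradK : EuclideanSpace ℝ (Fin d) → EuclideanSpace ℝ (Fin d)}
    {f : ℝ × EuclideanSpace ℝ (Fin d) × EuclideanSpace ℝ (Fin d) → ℝ} {A B ε T t : ℝ} {L : NNReal}
    (S : IsKineticSolution gradK ε T f) (hA : ∀ z, ‖gradK z‖ ≤ A) (hL : LipschitzWith L gradK)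
    (hB : kinMass f 0 ≤ B) (hε : 4 * L * B * ε ≤ 1) (ht : t ∈ Icc 0 T) :
    kinMoment gradK f t ≤
      kinMoment gradK f 0 * Real.exp (-t / (2 * ε)) + 4 * L * A * B ^ 3 * ε := by
  have hε₀ := S.inertia_pos
  have hA₀ : 0 ≤ A := (norm_nonneg _).trans (hA 0)
  have hB₀ : 0 ≤ B := (S.kinMass_nonneg ⟨le_rfl, ht.1.trans ht.2⟩).trans hB
  have hrate : ∀ τ ∈ Ico 0 T, -kinMoment gradK f τ / ε +
      2 * L * kinMass f τ * (kinMoment gradK f τ + A * kinMass f τ ^ 2) ≤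
        -(2 * ε)⁻¹ * kinMoment gradK f τ + 2 * L * A * B ^ 3 := by
    intro τ hτ
    have hτ' := Ico_subset_Icc_self hτ
    have hI := S.kinMoment_nonneg hτ'
    have hM : kinMass f τ ≤ B := (S.kinMass_eq hA hL.continuous hτ').trans_le hB
    have hM₀ := S.kinMass_nonneg hτ'
    have habsorb : 2 * L * B ≤ (2 * ε)⁻¹ := by
      rw [← one_div, le_div_iff₀ (by positivity)]
      linarith
    calc _ ≤ -kinMoment gradK f τ / ε + 2 * L * B * (kinMoment gradK f τ + A * B ^ 2) := by gcongr
      _ = -kinMoment gradK f τ / ε + 2 * L * B * kinMoment gradK f τ + 2 * L * A * B ^ 3 := by ring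
      _ ≤ -kinMoment gradK f τ / ε + (2 * ε)⁻¹ * kinMoment gradK f τ + 2 * L * A * B ^ 3 := by
        gcongr
      _ = -(2 * ε)⁻¹ * kinMoment gradK f τ + 2 * L * A * B ^ 3 := by
        field_simp
        ring
  have hgronwall := le_gronwallBound_of_liminf_deriv_right_le
    (S.continuousOn_kinMoment hA hL.continuous)
    (fun τ hτ r hr => (S.eventually_slope_kinMoment_lt hA hL hτ hr).frequently) le_rfl hrate t ht
  rw [gronwallBound_of_K_ne_0 (by simpa using hε₀.ne')] at hgronwall
  have hexp : -(2 * ε)⁻¹ * (t - 0) = -t / (2 * ε) := by ring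
  have hconst : 2 * L * A * B ^ 3 / -(2 * ε)⁻¹ = -(4 * L * A * B ^ 3 * ε) := by
    field_simp
    ring
  simp only [hexp, hconst] at hgronwall
  nlinarith [Real.exp_pos (-t / (2 * ε)), (by positivity : 0 ≤ 4 * L * A * B ^ 3 * ε)]

/-- **Main estimate for smooth solutions (Proposition 4.2).**
There exist constants `C₀, ε₀ > 0`, depending only on the dimension, a bound
`A` for `‖∇K‖_{W^{1,∞}}` and a bound `B` for `‖(1+|v|) f₀‖_{L¹}`, such that for
every `ε ≤ ε₀` and every nonnegative, compactly supported `C¹` classical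
solution `f` of the kinetic aggregation equation
`∂ₜ f + v·∇ₓ f = (1/ε)∇_v·((v + ∇K ∗ ρ) f)` on `[0,T]`, the generalized moment
`I(t) = ∫∫ |v + ∇K ∗ ρ| f dxdv` satisfies
`I(t) ≤ I(0) e^{-t/(2ε)} + C₀ ε` for all `t ∈ [0,T]`. -/
theorem kinetic_moment_estimate_smooth
    (d : ℕ) (A B : ℝ) (hA : 0 ≤ A) (hB : 0 ≤ B) :
    ∃ C₀ ε₀ : ℝ, 0 < ε₀ ∧
      ∀ (T ε : ℝ), 0 < T → 0 < ε → ε ≤ ε₀ →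
      ∀ gradK : EuclideanSpace ℝ (Fin d) → EuclideanSpace ℝ (Fin d),
        (∀ z, ‖gradK z‖ ≤ A) →
        (∀ z w, ‖gradK z - gradK w‖ ≤ A * ‖z - w‖) →
      ∀ f : ℝ × EuclideanSpace ℝ (Fin d) × EuclideanSpace ℝ (Fin d) → ℝ,
        ContDiff ℝ 1 f →
        (∀ t x v, 0 ≤ f (t, x, v)) →
        -- compact support in (x,v), uniformly for t ∈ [0,T]
        (∃ R : ℝ, ∀ t ∈ Icc (0:ℝ) T, ∀ x v, R < max ‖x‖ ‖v‖ → f (t, x, v) = 0) →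
        -- (1 + |v|) f₀ ∈ L¹ with norm at most B
        Integrable (fun p : EuclideanSpace ℝ (Fin d) × EuclideanSpace ℝ (Fin d) =>
          (1 + ‖p.2‖) * f (0, p.1, p.2)) →
        (∫ p : EuclideanSpace ℝ (Fin d) × EuclideanSpace ℝ (Fin d),
          (1 + ‖p.2‖) * f (0, p.1, p.2)) ≤ B →
        -- the kinetic aggregation equation, in directional-derivative form
        (∀ t ∈ Icc (0:ℝ) T, ∀ x v,
          fderiv ℝ f (t, x, v) (1, v, 0) =
            ε⁻¹ * ((d : ℝ) * f (t, x, v) +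
              fderiv ℝ f (t, x, v) (0, 0, v + kinField gradK f t x))) →
      ∀ t ∈ Icc (0:ℝ) T,
        kinMoment gradK f t ≤
          kinMoment gradK f 0 * Real.exp (-t / (2 * ε)) + C₀ * ε := by
  refine ⟨4 * A * A * B ^ 3, 1 / (4 * A * B + 1), by positivity, ?_⟩
  intro T ε _ hε hε₀ gradK hbound hlip f hcont hpos hsupp hint hB₀ heqn t ht
  lift A to NNReal using hA
  have S : IsKineticSolution gradK ε T f :=
    { inertia_pos := hε
      contDiff := hcont
      nonneg := fun t _ p => hpos t p.1 p.2
      exists_support_bound := hsupp.imp fun R hR t ht p hp => hR t ht p.1 p.2 hp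
      equation := heqn }
  have hmass : kinMass f 0 ≤ B :=
    (kinMass_le_integral_weight (fun p => hpos 0 p.1 p.2) hint).trans hB₀
  have hL : LipschitzWith A gradK := .of_dist_le_mul fun z w => by
    simpa only [dist_eq_norm] using hlip z w
  have hsmall : 4 * A * B * ε ≤ 1 := by
    have := (le_div_iff₀ (by positivity)).1 hε₀
    linarith
  exact kinetic_moment_estimate_smooth_general S hbound hL hmass hsmall ht
end

section
/- Assume ∇K ∈ W^{1,∞}(ℝ^d), let f₀ be a Borel probability measure on ℝ^d × ℝ^d supported in the ball B_{R₀}, let T > 0, ε > 0, and let f_ε : [0,T] → P(ℝ^d × ℝ^d) be a measure solution of the kinetic aggregation equation with inertia parameter ε and initial datum f₀, with x-marginals ρ_ε(t). Set J₀ = ∫∫ |v + (∇K ∗ ρ_ε(0))(x)| df₀(x,v). Then there exist constants C₀ and ε₀ > 0 depending only on ‖∇K‖_{W^{1,∞}} and R₀ such that for every ε ≤ ε₀, every t ∈ [0,T], and every bounded continuous φ : ℝ^d × ℝ^d → ℝ, | ∫∫ φ(x,v) (v + (∇K ∗ ρ_ε(t))(x)) df_ε(t)(x,v) | ≤ ‖φ‖_{L^∞}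 ( J₀ e^{−t/(2ε)} + C₀ ε ). -/
/-!
Follow the characteristics `(X, V)`. Since `ε V' = -V - F` with `‖F‖ ≤ sup ‖∇K‖`, speeds never
exceed `c = max R₀ (sup ‖∇K‖)`. Hence the force along a characteristic is Lipschitz in time with
constant `2 Lip(∇K) c`: both the particle and the sources of the field move at speed at most `c`.
A velocity relaxing at rate `1 / ε` towards a target moving at speed at most `L` ends up within
`L ε` of it, up to its initial distance damped by `e^{-t/ε}`. Integrating over the initial datum
gives the estimate.
-/

open Set Filter Topology MeasureTheory BoundedContinuousFunction

/-- The interaction field `(∇K ∗ μ)(x) = ∫ ∇K(x - y) dμ(y)` generated by a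
measure `μ` on `ℝ^d` (here `gradK` plays the role of `∇K`). -/
noncomputable def interactionField {d : ℕ}
    (gradK : EuclideanSpace ℝ (Fin d) → EuclideanSpace ℝ (Fin d))
    (μ : Measure (EuclideanSpace ℝ (Fin d))) (x : EuclideanSpace ℝ (Fin d)) :
    EuclideanSpace ℝ (Fin d) :=
  ∫ y, gradK (x - y) ∂μ

/-- `f : [0,T] → P(ℝ^d × ℝ^d)` is a measure solution of the kinetic aggregation
equation with inertia parameter `ε` and initial datum `f₀`: `f t` is the
push-forward of `f₀` under the flow map `Φ t` of the characteristic system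
`dx/dt = v`, `ε dv/dt = -v - (∇K ∗ ρ)(t,x)`, where `ρ t` is the first marginal
of `f t`. -/
def IsKineticMeasureSolution {d : ℕ}
    (gradK : EuclideanSpace ℝ (Fin d) → EuclideanSpace ℝ (Fin d)) (ε T : ℝ)
    (f₀ : Measure (EuclideanSpace ℝ (Fin d) × EuclideanSpace ℝ (Fin d)))
    (f : ℝ → Measure (EuclideanSpace ℝ (Fin d) × EuclideanSpace ℝ (Fin d))) : Prop :=
  ∃ Φ : ℝ → (EuclideanSpace ℝ (Fin d) × EuclideanSpace ℝ (Fin d)) →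
        (EuclideanSpace ℝ (Fin d) × EuclideanSpace ℝ (Fin d)),
    (∀ t, Measurable (Φ t)) ∧
    (∀ p, Φ 0 p = p) ∧
    (∀ p, ∀ t ∈ Icc (0:ℝ) T,
      HasDerivAt (fun s => (Φ s p).1) ((Φ t p).2) t ∧
      HasDerivAt (fun s => (Φ s p).2)
        (ε⁻¹ • (-(Φ t p).2 -
          interactionField gradK ((f t).map Prod.fst) (Φ t p).1)) t) ∧
    (∀ t ∈ Icc (0:ℝ) T, f t = f₀.map (Φ t))

open scoped NNReal

section Relaxation

variable {E : Type*} [NormedAddCommGroup E] [NormedSpace ℝ E] {ε t c L : ℝ} {u g : ℝ → E}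

theorem hasDerivAt_exp_div (ε s : ℝ) :
    HasDerivAt (fun r ↦ Real.exp (r / ε)) (Real.exp (s / ε) / ε) s := by
  simpa only [id, mul_one_div] using ((hasDerivAt_id s).div_const ε).exp

theorem exp_div_mul_norm_le_of_relaxation {b B : ℝ → ℝ} (hε : 0 < ε) (ht : 0 ≤ t)
    (hu : ∀ s ∈ Icc 0 t, HasDerivAt u (ε⁻¹ • (-u s - g s)) s)
    (hg : ∀ s ∈ Icc 0 t, ‖g s‖ ≤ b s)
    (hB : ∀ s, HasDerivAt B (Real.exp (s / ε) / ε * b s) s) :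
    Real.exp (t / ε) * ‖u t‖ ≤ ‖u 0‖ + B t - B 0 := by
  have deriv_exp_smul : ∀ s ∈ Icc 0 t, HasDerivAt (fun r ↦ Real.exp (r / ε) • u r)
      (-((Real.exp (s / ε) / ε) • g s)) s := fun s hs ↦
    ((hasDerivAt_exp_div ε s).smul (hu s hs)).congr_deriv (by
      simp only [smul_smul, smul_sub, smul_neg, div_eq_mul_inv]; abel)
  have norm_deriv_le : ∀ s ∈ Ico 0 t,
      ‖-((Real.exp (s / ε) / ε) • g s)‖ ≤ Real.exp (s / ε) / ε * b s := fun s hs ↦ by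
    rw [norm_neg, norm_smul, Real.norm_of_nonneg (by positivity)]
    gcongr
    exact hg s (Ico_subset_Icc_self hs)
  have norm_exp_smul_le := image_norm_le_of_norm_deriv_right_le_deriv_boundary
    (fun s hs ↦ (deriv_exp_smul s hs).continuousAt.continuousWithinAt)
    (fun s hs ↦ (deriv_exp_smul s (Ico_subset_Icc_self hs)).hasDerivWithinAt)
    (B := fun s ↦ ‖u 0‖ + B s - B 0) (by simp)
    (fun s ↦ ((hB s).const_add _).sub_const _) norm_deriv_le (right_mem_Icc.2 ht)
  simpa [norm_smul] using norm_exp_smul_le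

theorem norm_le_of_relaxation (hε : 0 < ε) (ht : 0 ≤ t)
    (hu : ∀ s ∈ Icc 0 t, HasDerivAt u (ε⁻¹ • (-u s - g s)) s)
    (hg : ∀ s ∈ Icc 0 t, ‖g s‖ ≤ c) (hu₀ : ‖u 0‖ ≤ c) : ‖u t‖ ≤ c := by
  have weighted := exp_div_mul_norm_le_of_relaxation hε ht hu hg
    fun s ↦ (hasDerivAt_exp_div ε s).mul_const c
  rw [zero_div, Real.exp_zero, one_mul] at weighted
  exact le_of_mul_le_mul_left (by linarith) (Real.exp_pos (t / ε))

theorem norm_add_le_of_relaxation (hε : 0 < ε) (ht : 0 ≤ t)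
    (hu : ∀ s ∈ Icc 0 t, HasDerivAt u (ε⁻¹ • (-u s - g s)) s)
    (hg : ∀ s ∈ Icc 0 t, ‖g s - g t‖ ≤ L * (t - s)) :
    ‖u t + g t‖ ≤ ‖u 0 + g 0‖ * Real.exp (-t / ε) + L * ε * (1 - Real.exp (-t / ε)) := by
  -- Freezing the target at its final value turns `u + g t` into a relaxation towards `g t - g s`.
  have shifted : ∀ s ∈ Icc 0 t,
      HasDerivAt (fun r ↦ u r + g t) (ε⁻¹ • (-(u s + g t) - (g s - g t))) s := fun s hs ↦
    ((hu s hs).add_const (g t)).congr_deriv (by congr 1; abel)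
  have primitive : ∀ s, HasDerivAt (fun r ↦ Real.exp (r / ε) * (L * (t - r + ε)))
      (Real.exp (s / ε) / ε * (L * (t - s))) s := fun s ↦
    ((hasDerivAt_exp_div ε s).mul
      ((((hasDerivAt_id s).const_sub t).add_const ε).const_mul L)).congr_deriv (by
        simp only [id]; field_simp; ring)
  have weighted := exp_div_mul_norm_le_of_relaxation hε ht shifted hg primitive
  have initial : ‖u 0 + g t‖ ≤ ‖u 0 + g 0‖ + L * t := calc
    ‖u 0 + g t‖ = ‖(u 0 + g 0) - (g 0 - g t)‖ := by congr 1; abel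
    _ ≤ ‖u 0 + g 0‖ + ‖g 0 - g t‖ := norm_sub_le _ _
    _ ≤ ‖u 0 + g 0‖ + L * t := by simpa using hg 0 (left_mem_Icc.2 ht)
  simp only [zero_div, Real.exp_zero, sub_self, sub_zero, zero_add, one_mul] at weighted
  rw [neg_div, Real.exp_neg]
  refine le_of_mul_le_mul_left ?_ (Real.exp_pos (t / ε))
  calc Real.exp (t / ε) * ‖u t + g t‖
      ≤ ‖u 0 + g 0‖ + L * ε * (Real.exp (t / ε) - 1) := by linarith
    _ = _ := by field_simp

end Relaxation

section MeanField

variable {E Ω : Type*} [NormedAddCommGroup E] [NormedSpace ℝ E] [MeasurableSpace Ω]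
  {P : Measure Ω} {G : E → E} {X Y : Ω → E} {c r : ℝ} {L : ℝ≥0}

/-- The field `∇K ∗ ρ` generated by `ρ`, the law of the random position `X` under `P`, with `G` in
the role of `∇K`. Working with `X` rather than with `ρ` allows the fields of two laws to be compared
through the coupling of their random variables. -/
noncomputable def meanField (G : E → E) (P : Measure Ω) (X : Ω → E) (x : E) : E :=
  ∫ ω, G (x - X ω) ∂P

/-- The defect `v + (∇K ∗ ρ)(x)` along a random position `X` with law `ρ` and velocity `V`: it
vanishes exactly when the velocity follows the first-order aggregation dynamics. -/
noncomputable def velocityDefect (G : E → E) (P : Measure Ω) (X V : Ω → E) (ω : Ω) : E :=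
  V ω + meanField G P X (X ω)

theorem norm_meanField_le [IsProbabilityMeasure P] (hG : ∀ z, ‖G z‖ ≤ c) (x : E) :
    ‖meanField G P X x‖ ≤ c := by
  simpa only [meanField, probReal_univ, mul_one] using
    norm_integral_le_of_norm_le_const (μ := P) (.of_forall fun ω ↦ hG (x - X ω))

theorem norm_meanField_sub_meanField_le [IsProbabilityMeasure P] (hG : ∀ z, ‖G z‖ ≤ c)
    (hGL : LipschitzWith L G) (hX : AEStronglyMeasurable X P) (hY : AEStronglyMeasurable Y P)
    {x y : E} (hXY : ∀ᵐ ω ∂P, ‖(x - X ω) - (y - Y ω)‖ ≤ r) :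
    ‖meanField G P X x - meanField G P Y y‖ ≤ L * r := by
  have integrable_shift {Z : Ω → E} (hZ : AEStronglyMeasurable Z P) (z : E) :
      Integrable (fun ω ↦ G (z - Z ω)) P :=
    .of_bound (hGL.continuous.comp_aestronglyMeasurable (aestronglyMeasurable_const.sub hZ)) c
      (.of_forall fun _ ↦ hG _)
  have integrand_le : ∀ᵐ ω ∂P, ‖G (x - X ω) - G (y - Y ω)‖ ≤ L * r := by
    filter_upwards [hXY] with ω hω
    exact (hGL.norm_sub_le _ _).trans (by gcongr)
  rw [meanField, meanField, ← integral_sub (integrable_shift hX x) (integrable_shift hY y)]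
  simpa only [probReal_univ, mul_one] using norm_integral_le_of_norm_le_const integrand_le

theorem lipschitzWith_meanField [IsProbabilityMeasure P] (hG : ∀ z, ‖G z‖ ≤ c)
    (hGL : LipschitzWith L G) (hX : AEStronglyMeasurable X P) :
    LipschitzWith L (meanField G P X) :=
  .of_dist_le_mul fun x y ↦ by
    simpa only [dist_eq_norm] using norm_meanField_sub_meanField_le hG hGL hX hX
      (.of_forall fun ω ↦ (congrArg norm (sub_sub_sub_cancel_right x y (X ω))).le)

theorem interactionField_map_eq_meanField {d : ℕ}
    {G : EuclideanSpace ℝ (Fin d) → EuclideanSpace ℝ (Fin d)} {X : Ω → EuclideanSpace ℝ (Fin d)}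
    (hG : Continuous G) (hX : AEMeasurable X P) :
    interactionField G (P.map X) = meanField G P X := by
  ext1 x
  exact integral_map hX (by fun_prop : Continuous fun y ↦ G (x - y)).aestronglyMeasurable

end MeanField

/-- The characteristics of the kinetic aggregation equation as a random position `X` and velocity
`V` over a probability space: `X' = V` and `ε V' = -V - ∇K ∗ ρ(t)`, with `ρ(t)` the law of `X t`.
A measure solution is the case where the sample space is phase space with the initial datum, and a
system of `N` interacting particles the case of a uniform measure on `N` points. -/
structure IsKineticMotion {E Ω : Type*} [NormedAddCommGroup E] [NormedSpace ℝ E]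
    [MeasurableSpace Ω] (G : E → E) (ε T : ℝ) (P : Measure Ω) (X V : ℝ → Ω → E) : Prop where
  aestronglyMeasurable_position : ∀ t ∈ Icc 0 T, AEStronglyMeasurable (X t) P
  aestronglyMeasurable_velocity : ∀ t ∈ Icc 0 T, AEStronglyMeasurable (V t) P
  hasDerivAt_position : ∀ ω, ∀ t ∈ Icc 0 T, HasDerivAt (X · ω) (V t ω) t
  hasDerivAt_velocity : ∀ ω, ∀ t ∈ Icc 0 T,
    HasDerivAt (V · ω) (ε⁻¹ • (-V t ω - meanField G P (X t) (X t ω))) t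

namespace IsKineticMotion

variable {E Ω : Type*} [NormedAddCommGroup E] [NormedSpace ℝ E] [MeasurableSpace Ω]
  {P : Measure Ω} [IsProbabilityMeasure P] {G : E → E} {X V : ℝ → Ω → E} {ε T c s t : ℝ}
  {L : ℝ≥0} {ω : Ω}

theorem norm_velocity_le (h : IsKineticMotion G ε T P X V) (hε : 0 < ε)
    (hG : ∀ z, ‖G z‖ ≤ c) (hω : ‖V 0 ω‖ ≤ c) (ht : t ∈ Icc 0 T) : ‖V t ω‖ ≤ c :=
  norm_le_of_relaxation hε ht.1
    (fun r hr ↦ h.hasDerivAt_velocity ω r (Icc_subset_Icc_right ht.2 hr))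
    (fun _ _ ↦ norm_meanField_le hG _) hω

theorem norm_position_sub_le (h : IsKineticMotion G ε T P X V) (hε : 0 < ε)
    (hG : ∀ z, ‖G z‖ ≤ c) (hω : ‖V 0 ω‖ ≤ c) (hs : s ∈ Icc 0 T) (ht : t ∈ Icc 0 T) :
    ‖X s ω - X t ω‖ ≤ c * |s - t| :=
  (convex_Icc 0 T).norm_image_sub_le_of_norm_hasDerivWithin_le
    (fun r hr ↦ (h.hasDerivAt_position ω r hr).hasDerivWithinAt)
    (fun _ hr ↦ h.norm_velocity_le hε hG hω hr) ht hs

theorem norm_force_sub_le (h : IsKineticMotion G ε T P X V) (hε : 0 < ε)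
    (hG : ∀ z, ‖G z‖ ≤ c) (hGL : LipschitzWith L G) (hV : ∀ᵐ ω ∂P, ‖V 0 ω‖ ≤ c)
    (hω : ‖V 0 ω‖ ≤ c) (hs : s ∈ Icc 0 T) (ht : t ∈ Icc 0 T) :
    ‖meanField G P (X s) (X s ω) - meanField G P (X t) (X t ω)‖ ≤ 2 * L * c * |s - t| := by
  have relative_displacement_le :
      ∀ᵐ η ∂P, ‖(X s ω - X s η) - (X t ω - X t η)‖ ≤ 2 * c * |s - t| := by
    filter_upwards [hV] with η hη
    calc ‖(X s ω - X s η) - (X t ω - X t η)‖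
        = ‖(X s ω - X t ω) - (X s η - X t η)‖ := by rw [sub_sub_sub_comm]
      _ ≤ ‖X s ω - X t ω‖ + ‖X s η - X t η‖ := norm_sub_le _ _
      _ ≤ c * |s - t| + c * |s - t| := add_le_add (h.norm_position_sub_le hε hG hω hs ht)
          (h.norm_position_sub_le hε hG hη hs ht)
      _ = 2 * c * |s - t| := by ring
  calc ‖meanField G P (X s) (X s ω) - meanField G P (X t) (X t ω)‖
      ≤ L * (2 * c * |s - t|) := norm_meanField_sub_meanField_le hG hGL
        (h.aestronglyMeasurable_position s hs) (h.aestronglyMeasurable_position t ht)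
        relative_displacement_le
    _ = 2 * L * c * |s - t| := by ring

theorem norm_velocityDefect_le (h : IsKineticMotion G ε T P X V) (hε : 0 < ε)
    (hG : ∀ z, ‖G z‖ ≤ c) (hGL : LipschitzWith L G) (hV : ∀ᵐ ω ∂P, ‖V 0 ω‖ ≤ c)
    (hω : ‖V 0 ω‖ ≤ c) (ht : t ∈ Icc 0 T) :
    ‖velocityDefect G P (X t) (V t) ω‖ ≤
      ‖velocityDefect G P (X 0) (V 0) ω‖ * Real.exp (-t / ε) +
        2 * L * c * ε * (1 - Real.exp (-t / ε)) := by
  have mem_Icc_of_mem {r : ℝ} (hr : r ∈ Icc 0 t) : r ∈ Icc 0 T := Icc_subset_Icc_right ht.2 hr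
  refine norm_add_le_of_relaxation (u := (V · ω)) (g := fun r ↦ meanField G P (X r) (X r ω)) hε ht.1
    (fun r hr ↦ h.hasDerivAt_velocity ω r (mem_Icc_of_mem hr)) fun r hr ↦ ?_
  rw [← abs_of_nonneg (sub_nonneg.2 hr.2), abs_sub_comm]
  exact h.norm_force_sub_le hε hG hGL hV hω (mem_Icc_of_mem hr) ht

theorem integrable_velocityDefect (h : IsKineticMotion G ε T P X V) (hε : 0 < ε)
    (hG : ∀ z, ‖G z‖ ≤ c) (hGL : LipschitzWith L G) (hV : ∀ᵐ ω ∂P, ‖V 0 ω‖ ≤ c)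
    (ht : t ∈ Icc 0 T) : Integrable (velocityDefect G P (X t) (V t)) P := by
  have hX := h.aestronglyMeasurable_position t ht
  have field_measurable : AEStronglyMeasurable (fun ω ↦ meanField G P (X t) (X t ω)) P :=
    (lipschitzWith_meanField hG hGL hX).continuous.comp_aestronglyMeasurable hX
  refine .of_bound ((h.aestronglyMeasurable_velocity t ht).add field_measurable) (c + c) ?_
  filter_upwards [hV] with ω hω
  exact norm_add_le_of_le (h.norm_velocity_le hε hG hω ht) (norm_meanField_le hG _)

theorem integral_norm_velocityDefect_le (h : IsKineticMotion G ε T P X V) (hε : 0 < ε)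
    (hG : ∀ z, ‖G z‖ ≤ c) (hGL : LipschitzWith L G) (hV : ∀ᵐ ω ∂P, ‖V 0 ω‖ ≤ c)
    (ht : t ∈ Icc 0 T) :
    ∫ ω, ‖velocityDefect G P (X t) (V t) ω‖ ∂P ≤
      (∫ ω, ‖velocityDefect G P (X 0) (V 0) ω‖ ∂P) * Real.exp (-t / ε) +
        2 * L * c * ε * (1 - Real.exp (-t / ε)) := by
  have hzero : (0 : ℝ) ∈ Icc 0 T := left_mem_Icc.2 (ht.1.trans ht.2)
  have initial_integrable := (h.integrable_velocityDefect hε hG hGL hV hzero).norm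
  calc ∫ ω, ‖velocityDefect G P (X t) (V t) ω‖ ∂P
      ≤ ∫ ω, (‖velocityDefect G P (X 0) (V 0) ω‖ * Real.exp (-t / ε) +
          2 * L * c * ε * (1 - Real.exp (-t / ε))) ∂P := by
        refine integral_mono_ae (h.integrable_velocityDefect hε hG hGL hV ht).norm
          ((initial_integrable.mul_const _).add (integrable_const _)) ?_
        filter_upwards [hV] with ω hω
        exact h.norm_velocityDefect_le hε hG hGL hV hω ht
    _ = _ := by
        rw [integral_add (initial_integrable.mul_const _) (integrable_const _), integral_mul_const,
          integral_const, probReal_univ, one_smul]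

end IsKineticMotion

theorem norm_integral_smul_le_mul_integral_norm {𝕜 E Ω : Type*} [NormedField 𝕜]
    [NormedAddCommGroup E] [NormedSpace ℝ E] [NormedSpace 𝕜 E] [MeasurableSpace Ω] {μ : Measure Ω}
    {φ : Ω → 𝕜} {w : Ω → E} {M : ℝ}
    (hφ : ∀ᵐ ω ∂μ, ‖φ ω‖ ≤ M) (hw : Integrable w μ) :
    ‖∫ ω, φ ω • w ω ∂μ‖ ≤ M * ∫ ω, ‖w ω‖ ∂μ := by
  rw [← integral_const_mul]
  refine norm_integral_le_of_norm_le (hw.norm.const_mul M) ?_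
  filter_upwards [hφ] with ω hω
  rw [norm_smul]
  gcongr

theorem ae_norm_snd_le_of_measure_eq_zero {E F : Type*} [SeminormedAddCommGroup E]
    [SeminormedAddCommGroup F] [MeasurableSpace (E × F)] {μ : Measure (E × F)} {R : ℝ}
    (hR : 0 ≤ R) (hμ : μ {p | R ^ 2 < ‖p.1‖ ^ 2 + ‖p.2‖ ^ 2} = 0) : ∀ᵐ p ∂μ, ‖p.2‖ ≤ R := by
  filter_upwards [measure_eq_zero_iff_ae_notMem.1 hμ] with p hp
  refine le_of_sq_le_sq ?_ hR
  linarith [sq_nonneg ‖p.1‖, not_lt.1 hp]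

section MeasureSolution

variable {d : ℕ} {gradK : EuclideanSpace ℝ (Fin d) → EuclideanSpace ℝ (Fin d)} {ε T c t : ℝ}
  {L : ℝ≥0} {f₀ : Measure (EuclideanSpace ℝ (Fin d) × EuclideanSpace ℝ (Fin d))}
  {f : ℝ → Measure (EuclideanSpace ℝ (Fin d) × EuclideanSpace ℝ (Fin d))}

theorem IsKineticMeasureSolution.exists_isKineticMotion
    (hf : IsKineticMeasureSolution gradK ε T f₀ f) (hK : Continuous gradK) :
    ∃ Φ : ℝ → EuclideanSpace ℝ (Fin d) × EuclideanSpace ℝ (Fin d) →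
        EuclideanSpace ℝ (Fin d) × EuclideanSpace ℝ (Fin d),
      IsKineticMotion gradK ε T f₀ (fun s p ↦ (Φ s p).1) (fun s p ↦ (Φ s p).2) ∧
      Φ 0 = id ∧ (∀ t, Measurable (Φ t)) ∧ (∀ t ∈ Icc 0 T, f t = f₀.map (Φ t)) ∧
      ∀ t ∈ Icc 0 T, interactionField gradK ((f t).map Prod.fst) =
        meanField gradK f₀ (fun p ↦ (Φ t p).1) := by
  obtain ⟨Φ, hΦm, hΦ0, hΦ', hfΦ⟩ := hf
  have field_eq : ∀ t ∈ Icc 0 T, interactionField gradK ((f t).map Prod.fst) =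
      meanField gradK f₀ (fun p ↦ (Φ t p).1) := fun t ht ↦ by
    rw [hfΦ t ht, Measure.map_map measurable_fst (hΦm t)]
    exact interactionField_map_eq_meanField hK (hΦm t).fst.aemeasurable
  refine ⟨Φ, ⟨fun t _ ↦ (hΦm t).fst.aestronglyMeasurable,
    fun t _ ↦ (hΦm t).snd.aestronglyMeasurable, fun p t ht ↦ (hΦ' p t ht).1, fun p t ht ↦ ?_⟩,
    funext hΦ0, hΦm, hfΦ, field_eq⟩
  rw [← field_eq t ht]
  exact (hΦ' p t ht).2

theorem kinetic_moment_estimate_measure_general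
    {φ : EuclideanSpace ℝ (Fin d) × EuclideanSpace ℝ (Fin d) → ℝ} {M : ℝ} (hε : 0 < ε)
    (hK : ∀ z, ‖gradK z‖ ≤ c) (hKL : LipschitzWith L gradK) [IsProbabilityMeasure f₀]
    (hf₀ : ∀ᵐ p ∂f₀, ‖p.2‖ ≤ c) (hf : IsKineticMeasureSolution gradK ε T f₀ f)
    (ht : t ∈ Icc 0 T) (hφ : AEStronglyMeasurable φ (f t)) (hM : ∀ p, ‖φ p‖ ≤ M) :
    ‖∫ p, φ p • (p.2 + interactionField gradK ((f t).map Prod.fst) p.1) ∂(f t)‖ ≤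
      M * ((∫ p, ‖p.2 + interactionField gradK (f₀.map Prod.fst) p.1‖ ∂f₀) *
        Real.exp (-t / ε) + 2 * L * c * ε * (1 - Real.exp (-t / ε))) := by
  obtain ⟨Φ, motion, hΦ0, hΦm, hfΦ, field_eq⟩ := hf.exists_isKineticMotion hKL.continuous
  have hV : ∀ᵐ p ∂f₀, ‖(Φ 0 p).2‖ ≤ c := by simpa only [hΦ0, id] using hf₀
  have integrand_measurable : AEStronglyMeasurable
      (fun p ↦ φ p • (p.2 + meanField gradK f₀ (fun q ↦ (Φ t q).1) p.1)) (f₀.map (Φ t)) := by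
    have field_continuous :=
      (lipschitzWith_meanField hK hKL (hΦm t).fst.aestronglyMeasurable (P := f₀)).continuous
    rw [← hfΦ t ht]
    exact hφ.smul (by fun_prop : Continuous _).aestronglyMeasurable
  have pullback : ∫ p, φ p • (p.2 + interactionField gradK ((f t).map Prod.fst) p.1) ∂(f t) =
      ∫ p, φ (Φ t p) • velocityDefect gradK f₀ (fun q ↦ (Φ t q).1) (fun q ↦ (Φ t q).2) p ∂f₀ := by
    rw [field_eq t ht, hfΦ t ht]
    exact integral_map (hΦm t).aemeasurable integrand_measurable
  have hM₀ : 0 ≤ M := (norm_nonneg _).trans (hM 0)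
  have initial_field_eq := interactionField_map_eq_meanField (P := f₀) hKL.continuous
    measurable_fst.aemeasurable
  have moment_le := motion.integral_norm_velocityDefect_le hε hK hKL hV ht
  simp only [hΦ0] at moment_le
  rw [pullback, initial_field_eq]
  refine (norm_integral_smul_le_mul_integral_norm (.of_forall fun p ↦ hM (Φ t p))
    (motion.integrable_velocityDefect hε hK hKL hV ht)).trans ?_
  gcongr
  exact moment_le

end MeasureSolution

/-- **Main estimate for measure-valued solutions (Proposition 4.6).**
There exist constants `C₀, ε₀ > 0`, depending only on the dimension, a bound
`A` for `‖∇K‖_{W^{1,∞}}` and the support radius `R₀` of `f₀`, such that for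
every measure solution `f_ε` of the kinetic aggregation equation with inertia
parameter `ε ≤ ε₀`, every `t ∈ [0,T]` and every bounded continuous `φ`,
`|∫∫ φ(x,v)(v + (∇K ∗ ρ_ε(t))(x)) df_ε(t)| ≤ ‖φ‖_∞ (J₀ e^{-t/(2ε)} + C₀ ε)`,
where `J₀ = ∫∫ |v + (∇K ∗ ρ_ε(0))(x)| df₀`. -/
theorem kinetic_moment_estimate_measure
    (d : ℕ) (A R₀ : ℝ) (hA : 0 ≤ A) (hR₀ : 0 ≤ R₀) :
    ∃ C₀ ε₀ : ℝ, 0 < ε₀ ∧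
      ∀ (T ε : ℝ), 0 < T → 0 < ε → ε ≤ ε₀ →
      ∀ gradK : EuclideanSpace ℝ (Fin d) → EuclideanSpace ℝ (Fin d),
        (∀ z, ‖gradK z‖ ≤ A) →
        (∀ z w, ‖gradK z - gradK w‖ ≤ A * ‖z - w‖) →
      ∀ f₀ : Measure (EuclideanSpace ℝ (Fin d) × EuclideanSpace ℝ (Fin d)),
        IsProbabilityMeasure f₀ →
        f₀ {p | R₀ ^ 2 < ‖p.1‖ ^ 2 + ‖p.2‖ ^ 2} = 0 →
      ∀ f : ℝ → Measure (EuclideanSpace ℝ (Fin d) × EuclideanSpace ℝ (Fin d)),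
        IsKineticMeasureSolution gradK ε T f₀ f →
      ∀ t ∈ Icc (0:ℝ) T,
      ∀ φ : BoundedContinuousFunction
          (EuclideanSpace ℝ (Fin d) × EuclideanSpace ℝ (Fin d)) ℝ,
        ‖∫ p, φ p • (p.2 + interactionField gradK ((f t).map Prod.fst) p.1) ∂(f t)‖ ≤
          ‖φ‖ * ((∫ p, ‖p.2 + interactionField gradK (f₀.map Prod.fst) p.1‖ ∂f₀) *
              Real.exp (-t / (2 * ε)) + C₀ * ε) := by
  refine ⟨2 * A * max R₀ A, 1, one_pos, ?_⟩
  intro T ε _ hε _ gradK hK hKL f₀ _ hsupp f hf t ht φ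
  have gradK_lipschitz : LipschitzWith A.toNNReal gradK :=
    .of_dist_le' fun z w ↦ by simpa only [dist_eq_norm] using hKL z w
  have initial_speed_le : ∀ᵐ p ∂f₀, ‖p.2‖ ≤ max R₀ A :=
    (ae_norm_snd_le_of_measure_eq_zero hR₀ hsupp).mono fun _ hp ↦ le_max_of_le_left hp
  have estimate := kinetic_moment_estimate_measure_general hε (fun z ↦ le_max_of_le_right (hK z))
    gradK_lipschitz initial_speed_le hf ht φ.continuous.aestronglyMeasurable φ.norm_coe_le_norm
  rw [Real.coe_toNNReal A hA] at estimate
  refine estimate.trans ?_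
  gcongr ?_ * (_ * Real.exp ?_ + ?_)
  · rw [neg_div, neg_div, neg_le_neg_iff]
    exact div_le_div_of_nonneg_left ht.1 hε (by linarith)
  · exact mul_le_of_le_one_right (by positivity) (sub_le_self _ (Real.exp_pos _).le)
end

section
/- Assume ∇K ∈ W^{1,∞}(ℝ^d), let f₀ be a Borel probability measure on ℝ^d × ℝ^d supported in the ball B_{R₀}, ε > 0, T > 0, and let f : [0,T] → P(ℝ^d × ℝ^d) be a measure solution of the kinetic aggregation equation with inertia parameter ε and initial datum f₀, with x-marginals ρ(t). Set V = max(R₀, ‖∇K‖_{L^∞}). Then for every continuously differentiable ψ : ℝ^d → ℝ with bounded gradient and all s, t ∈ [0,T], | ∫ ψ dρ(t) − ∫ ψ dρ(s) | ≤ V ‖∇ψ‖_{L^∞} |t − s|. In particular the map t ↦ ∫ ψ dρ(t) is Lipschitz with a constant independent of ε. -/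
open Set Filter Topology MeasureTheory

/-! A damped velocity `ε v' = -v - F` relaxes towards `-F` at rate `ε⁻¹`, so it never leaves a ball
around `0` that contains both its initial value and the range of `F`, and the radius of this ball
does not depend on `ε`. Characteristics therefore move at speed at most `V = max R₀ M`, and the flow
maps at times `s` and `t` couple the two spatial marginals with transport distance at most
`V |t - s|`. Testing such a coupling against a Lipschitz function gives the estimate. -/

open scoped NNReal

section LipschitzTransport

variable {Ω E : Type*} [MeasurableSpace Ω] [PseudoMetricSpace E] [MeasurableSpace E]
  [OpensMeasurableSpace E] {μ : Measure Ω} {X Y : Ω → E} {ψ : E → ℝ} {C : ℝ≥0} {D : ℝ}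

theorem integrable_comp_of_lipschitzWith_of_ae_dist_le [IsFiniteMeasure μ] (hψ : LipschitzWith C ψ)
    (hX : AEMeasurable X μ) (hY : Integrable (fun ω => ψ (Y ω)) μ)
    (hXY : ∀ᵐ ω ∂μ, dist (X ω) (Y ω) ≤ D) : Integrable (fun ω => ψ (X ω)) μ := by
  have hψX : AEStronglyMeasurable (fun ω => ψ (X ω)) μ :=
    (hψ.continuous.measurable.comp_aemeasurable hX).aestronglyMeasurable
  have hdiff : Integrable (fun ω => ψ (X ω) - ψ (Y ω)) μ :=
    .of_bound (hψX.sub hY.aestronglyMeasurable) (C * D) <|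
      hXY.mono fun ω hω => hψ.dist_le_mul_of_le hω
  exact (hdiff.add hY).congr (.of_forall fun _ => sub_add_cancel _ _)

theorem abs_integral_map_sub_integral_map_le [IsProbabilityMeasure μ] (hψ : LipschitzWith C ψ)
    (hX : AEMeasurable X μ) (hY : AEMeasurable Y μ) (hψY : Integrable (fun ω => ψ (Y ω)) μ)
    (hXY : ∀ᵐ ω ∂μ, dist (X ω) (Y ω) ≤ D) :
    |(∫ x, ψ x ∂(μ.map X)) - ∫ x, ψ x ∂(μ.map Y)| ≤ C * D := by
  have hψX : Integrable (fun ω => ψ (X ω)) μ :=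
    integrable_comp_of_lipschitzWith_of_ae_dist_le hψ hX hψY hXY
  have hψm {ν : Measure E} : AEStronglyMeasurable ψ ν :=
    hψ.continuous.measurable.aestronglyMeasurable
  rw [integral_map hX hψm, integral_map hY hψm, ← integral_sub hψX hψY, ← Real.norm_eq_abs]
  have hdiff : ∀ᵐ ω ∂μ, ‖ψ (X ω) - ψ (Y ω)‖ ≤ C * D :=
    hXY.mono fun ω hω => hψ.dist_le_mul_of_le hω
  simpa only [probReal_univ, mul_one] using norm_integral_le_of_norm_le_const hdiff

end LipschitzTransport

theorem ae_norm_le_of_measure_sq_lt_add_sq_eq_zero {E F : Type*} [SeminormedAddCommGroup E]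
    [SeminormedAddCommGroup F] [MeasurableSpace E] [MeasurableSpace F] {μ : Measure (E × F)}
    {R : ℝ} (hR : 0 ≤ R) (hμ : μ {p | R ^ 2 < ‖p.1‖ ^ 2 + ‖p.2‖ ^ 2} = 0) :
    ∀ᵐ p ∂μ, ‖p‖ ≤ R := by
  filter_upwards [measure_eq_zero_iff_ae_notMem.1 hμ] with p hp
  have hsq : ‖p.1‖ ^ 2 + ‖p.2‖ ^ 2 ≤ R ^ 2 := not_lt.1 hp
  exact norm_prod_le_iff.2
    ⟨(sq_le_sq₀ (norm_nonneg _) hR).1 (by linarith only [hsq, sq_nonneg ‖p.2‖]),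
      (sq_le_sq₀ (norm_nonneg _) hR).1 (by linarith only [hsq, sq_nonneg ‖p.1‖])⟩

section DampedDynamics

variable {E : Type*} [NormedAddCommGroup E] [NormedSpace ℝ E]

theorem norm_le_of_hasDerivWithinAt_smul_neg_sub {v g : ℝ → E} {a b c C : ℝ} (hc : 0 ≤ c)
    (hcont : ContinuousOn v (Icc a b))
    (hderiv : ∀ t ∈ Ico a b, HasDerivWithinAt v (c • (-v t - g t)) (Ici t) t)
    (ha : ‖v a‖ ≤ C) (hg : ∀ t ∈ Ico a b, ‖g t‖ ≤ C) {t : ℝ} (ht : t ∈ Icc a b) :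
    ‖v t‖ ≤ C := by
  have hexp (r : ℝ) : HasDerivAt (fun r => Real.exp (c * r)) (Real.exp (c * r) * c) r := by
    simpa using ((hasDerivAt_id r).const_mul c).exp
  -- The integrating factor `exp (c r)` removes `v` from the right-hand side.
  have hweighted : ∀ r ∈ Ico a b, HasDerivWithinAt (fun r => Real.exp (c * r) • v r)
      (-((Real.exp (c * r) * c) • g r)) (Ici r) r := fun r hr =>
    ((hexp r).hasDerivWithinAt.smul (hderiv r hr)).congr_deriv (by module)
  have hnorm (r : ℝ) : ‖Real.exp (c * r) • v r‖ = ‖v r‖ * Real.exp (c * r) := by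
    rw [norm_smul, Real.norm_of_nonneg (Real.exp_nonneg _), mul_comm]
  have hcompare : ‖Real.exp (c * t) • v t‖ ≤ C * Real.exp (c * t) := by
    refine image_norm_le_of_norm_deriv_right_le_deriv_boundary
      (f := fun r => Real.exp (c * r) • v r) (B := fun r => C * Real.exp (c * r))
      (ContinuousOn.smul (by fun_prop) hcont) hweighted ?_
      (fun r => (hexp r).const_mul C) (fun r hr => ?_) ht
    · rw [hnorm]
      gcongr
    · have hweight : 0 ≤ Real.exp (c * r) * c := by positivity
      rw [norm_neg, norm_smul, Real.norm_of_nonneg hweight, mul_comm]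
      gcongr
      exact hg r hr
  rw [hnorm] at hcompare
  exact le_of_mul_le_mul_right hcompare (Real.exp_pos _)

/-- A phase-space curve `γ = (x, v)` solving the characteristic system `dx/dt = v`,
`ε dv/dt = -v - F(t, x)` on `[0,T]`, for an arbitrary force field `F`. Derivatives are one-sided at
the endpoints, and since `0⁻¹ = 0` the second equation is meaningful only for `ε ≠ 0`. -/
structure IsDampedCharacteristic (F : ℝ → E → E) (ε T : ℝ) (γ : ℝ → E × E) : Prop where
  hasDerivWithinAt_fst : ∀ t ∈ Icc 0 T,
    HasDerivWithinAt (fun s => (γ s).1) (γ t).2 (Icc 0 T) t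
  hasDerivWithinAt_snd : ∀ t ∈ Icc 0 T,
    HasDerivWithinAt (fun s => (γ s).2) (ε⁻¹ • (-(γ t).2 - F t (γ t).1)) (Icc 0 T) t

namespace IsDampedCharacteristic

variable {F : ℝ → E → E} {ε T M : ℝ} {γ : ℝ → E × E}

theorem norm_snd_le (hγ : IsDampedCharacteristic F ε T γ) (hε : 0 < ε)
    (hF : ∀ t ∈ Icc 0 T, ∀ x, ‖F t x‖ ≤ M) {t : ℝ} (ht : t ∈ Icc 0 T) :
    ‖(γ t).2‖ ≤ max ‖(γ 0).2‖ M :=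
  norm_le_of_hasDerivWithinAt_smul_neg_sub (v := fun s => (γ s).2) (inv_nonneg.2 hε.le)
    (fun r hr => (hγ.hasDerivWithinAt_snd r hr).continuousWithinAt)
    (fun r hr => (hγ.hasDerivWithinAt_snd r (Ico_subset_Icc_self hr)).mono_of_mem_nhdsWithin
      (Icc_mem_nhdsGE_of_mem hr))
    (le_max_left _ _)
    (fun r hr => (hF r (Ico_subset_Icc_self hr) _).trans (le_max_right _ _)) ht

theorem dist_fst_le (hγ : IsDampedCharacteristic F ε T γ) (hε : 0 < ε)
    (hF : ∀ t ∈ Icc 0 T, ∀ x, ‖F t x‖ ≤ M) {s t : ℝ} (hs : s ∈ Icc 0 T) (ht : t ∈ Icc 0 T) :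
    dist (γ t).1 (γ s).1 ≤ max ‖(γ 0).2‖ M * |t - s| := by
  rw [dist_eq_norm, ← Real.norm_eq_abs]
  exact (convex_Icc 0 T).norm_image_sub_le_of_norm_hasDerivWithin_le
    hγ.hasDerivWithinAt_fst (fun r hr => hγ.norm_snd_le hε hF hr) hs ht

end IsDampedCharacteristic

/-- `f t` is, for `t ∈ [0,T]`, the push-forward of `f₀` under a measurable flow map `Φ t` of the
characteristic system `dx/dt = v`, `ε dv/dt = -v - F(t, x)`. The kinetic aggregation equation is
the case `F t = ∇K ∗ ρ t`. -/
def IsDampedMeasureSolution [MeasurableSpace E] (F : ℝ → E → E) (ε T : ℝ)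
    (f₀ : Measure (E × E)) (f : ℝ → Measure (E × E)) : Prop :=
  ∃ Φ : ℝ → E × E → E × E,
    (∀ t ∈ Icc 0 T, Measurable (Φ t)) ∧
    (∀ p, Φ 0 p = p) ∧
    (∀ p, IsDampedCharacteristic F ε T (fun t => Φ t p)) ∧
    (∀ t ∈ Icc 0 T, f t = f₀.map (Φ t))

theorem macroscopic_density_time_lipschitz_general [MeasurableSpace E] [OpensMeasurableSpace E]
    {F : ℝ → E → E} {ε T M R₀ : ℝ} {f₀ : Measure (E × E)} [IsProbabilityMeasure f₀]
    {f : ℝ → Measure (E × E)} {ψ : E → ℝ} {C : ℝ≥0} (hε : 0 < ε)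
    (hF : ∀ t ∈ Icc 0 T, ∀ x, ‖F t x‖ ≤ M) (hf : IsDampedMeasureSolution F ε T f₀ f)
    (hvel : ∀ᵐ p ∂f₀, ‖p.2‖ ≤ R₀) (hψ : LipschitzWith C ψ)
    (hint : Integrable (fun p => ψ p.1) f₀) :
    ∀ s ∈ Icc 0 T, ∀ t ∈ Icc 0 T,
      |(∫ x, ψ x ∂((f t).map Prod.fst)) - ∫ x, ψ x ∂((f s).map Prod.fst)| ≤
        max R₀ M * C * |t - s| := by
  obtain ⟨Φ, hmeas, hinit, hchar, hpush⟩ := hf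
  intro s hs t ht
  have hpos {r : ℝ} (hr : r ∈ Icc 0 T) : Measurable fun p => (Φ r p).1 := (hmeas r hr).fst
  have hmarginal {r : ℝ} (hr : r ∈ Icc 0 T) :
      (f r).map Prod.fst = f₀.map fun p => (Φ r p).1 := by
    rw [hpush r hr, Measure.map_map measurable_fst (hmeas r hr)]
    rfl
  have hdist {r r' : ℝ} (hr : r ∈ Icc 0 T) (hr' : r' ∈ Icc 0 T) :
      ∀ᵐ p ∂f₀, dist (Φ r' p).1 (Φ r p).1 ≤ max R₀ M * |r' - r| := by
    filter_upwards [hvel] with p hp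
    refine ((hchar p).dist_fst_le hε hF hr hr').trans ?_
    rw [hinit]
    gcongr
  have hints : Integrable (fun p => ψ (Φ s p).1) f₀ :=
    integrable_comp_of_lipschitzWith_of_ae_dist_le hψ (hpos hs).aemeasurable
      (by simpa only [hinit] using hint) (hdist ⟨le_rfl, hs.1.trans hs.2⟩ hs)
  rw [hmarginal hs, hmarginal ht, mul_comm _ (C : ℝ), mul_assoc]
  exact abs_integral_map_sub_integral_map_le hψ (hpos ht).aemeasurable (hpos hs).aemeasurable
    hints (hdist hs ht)

end DampedDynamics

section KineticAggregation

variable {d : ℕ} {gradK : EuclideanSpace ℝ (Fin d) → EuclideanSpace ℝ (Fin d)} {ε T M : ℝ}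
  {f₀ : Measure (EuclideanSpace ℝ (Fin d) × EuclideanSpace ℝ (Fin d))}
  {f : ℝ → Measure (EuclideanSpace ℝ (Fin d) × EuclideanSpace ℝ (Fin d))}

theorem norm_interactionField_le (hbound : ∀ z, ‖gradK z‖ ≤ M)
    (μ : Measure (EuclideanSpace ℝ (Fin d))) [IsProbabilityMeasure μ]
    (x : EuclideanSpace ℝ (Fin d)) : ‖interactionField gradK μ x‖ ≤ M := by
  have hconv := norm_integral_le_of_norm_le_const (μ := μ) <|
    Eventually.of_forall fun y => hbound (x - y)
  simpa only [interactionField, probReal_univ, mul_one] using hconv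

theorem IsKineticMeasureSolution.isDampedMeasureSolution
    (hf : IsKineticMeasureSolution gradK ε T f₀ f) :
    IsDampedMeasureSolution (fun t => interactionField gradK ((f t).map Prod.fst)) ε T f₀ f := by
  obtain ⟨Φ, hmeas, hinit, hode, hpush⟩ := hf
  exact ⟨Φ, fun t _ => hmeas t, hinit, fun p =>
    ⟨fun t ht => (hode p t ht).1.hasDerivWithinAt,
      fun t ht => (hode p t ht).2.hasDerivWithinAt⟩, hpush⟩

theorem IsKineticMeasureSolution.norm_interactionField_marginal_le [IsProbabilityMeasure f₀]
    (hf : IsKineticMeasureSolution gradK ε T f₀ f) (hbound : ∀ z, ‖gradK z‖ ≤ M) :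
    ∀ t ∈ Icc 0 T, ∀ x, ‖interactionField gradK ((f t).map Prod.fst) x‖ ≤ M := by
  intro t ht x
  obtain ⟨Φ, hmeas, -, -, hpush⟩ := hf
  have : IsProbabilityMeasure (f t) := by
    rw [hpush t ht]
    exact Measure.isProbabilityMeasure_map (hmeas t).aemeasurable
  have : IsProbabilityMeasure ((f t).map Prod.fst) :=
    Measure.isProbabilityMeasure_map measurable_fst.aemeasurable
  exact norm_interactionField_le hbound _ x

end KineticAggregation

/-- **Equi-Lipschitz continuity in time of the macroscopic density
(uniformly in ε).** If `∇K` is bounded by `M` and Lipschitz, `f₀` is a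
probability measure supported in the ball `B_{R₀}` of `ℝ^{2d}`, and `f` is a
measure solution with `x`-marginals `ρ t = (f t).map Prod.fst`, then for every
`C¹` function `ψ : ℝ^d → ℝ` whose gradient is bounded by `Cψ`,
`|∫ψ dρ(t) − ∫ψ dρ(s)| ≤ V · Cψ · |t − s|` with `V = max R₀ M`;
in particular `t ↦ ∫ψ dρ(t)` is Lipschitz with a constant independent of `ε`. -/
theorem macroscopic_density_time_lipschitz
    (d : ℕ) (T ε M R₀ : ℝ) (hT : 0 < T) (hε : 0 < ε) (hM : 0 ≤ M) (hR₀ : 0 ≤ R₀)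
    (gradK : EuclideanSpace ℝ (Fin d) → EuclideanSpace ℝ (Fin d)) (L : NNReal)
    (hbound : ∀ z, ‖gradK z‖ ≤ M)
    (hlip : LipschitzWith L gradK)
    (f₀ : Measure (EuclideanSpace ℝ (Fin d) × EuclideanSpace ℝ (Fin d)))
    [IsProbabilityMeasure f₀]
    (hsupp : f₀ {p | R₀ ^ 2 < ‖p.1‖ ^ 2 + ‖p.2‖ ^ 2} = 0)
    (f : ℝ → Measure (EuclideanSpace ℝ (Fin d) × EuclideanSpace ℝ (Fin d)))
    (hf : IsKineticMeasureSolution gradK ε T f₀ f)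
    (ψ : EuclideanSpace ℝ (Fin d) → ℝ) (Cψ : ℝ)
    (hψ : ContDiff ℝ 1 ψ)
    (hψgrad : ∀ x, ‖fderiv ℝ ψ x‖ ≤ Cψ) :
    ∀ s ∈ Icc (0:ℝ) T, ∀ t ∈ Icc (0:ℝ) T,
      |(∫ x, ψ x ∂((f t).map Prod.fst)) - ∫ x, ψ x ∂((f s).map Prod.fst)| ≤
        max R₀ M * Cψ * |t - s| := by
  lift Cψ to ℝ≥0 using (norm_nonneg _).trans (hψgrad 0)
  have hψlip : LipschitzWith Cψ ψ :=
    lipschitzWith_of_nnnorm_fderiv_le (hψ.differentiable one_ne_zero) hψgrad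
  have hball : ∀ᵐ p ∂f₀, ‖p‖ ≤ R₀ := ae_norm_le_of_measure_sq_lt_add_sq_eq_zero hR₀ hsupp
  have hint : Integrable (fun p => ψ p.1) f₀ :=
    integrable_comp_of_lipschitzWith_of_ae_dist_le (Y := fun _ => 0) hψlip
      measurable_fst.aemeasurable (integrable_const _) <| hball.mono fun p hp => by
        simpa only [dist_zero_right] using (norm_fst_le p).trans hp
  exact macroscopic_density_time_lipschitz_general hε (hf.norm_interactionField_marginal_le hbound)
    hf.isDampedMeasureSolution (hball.mono fun p hp => (norm_snd_le p).trans hp) hψlip hint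
end

section
/- Let T > 0, assume ∇K ∈ W^{1,∞}(ℝ^d), and let f₀ be a compactly supported Borel probability measure on ℝ^d × ℝ^d with x-marginal ρ₀. For each ε > 0 let f_ε : [0,T] → P(ℝ^d × ℝ^d) be a measure solution of the kinetic aggregation equation with inertia parameter ε and initial datum f₀, with x-marginals ρ_ε(t). Then there exists a family ρ(t) (t ∈ [0,T]) of compactly supported Borel probability measures on ℝ^d, narrowly continuous in t, such that: (a) for every t ∈ [0,T], ρ_ε(t) → ρ(t) weakly as ε → 0 (i.e., ∫ ψ dρ_ε(t) → ∫ ψ dρ(t) for every bounded continuous ψ : ℝ^d → ℝ); (b) ∇K ∗ ρ_ε → ∇K ∗ ρ uniformly on [0,T] × Ω for every compact Ω ⊂ ℝ^d; and (c) ρ is a weak solution of the aggregation equation ∂_t ρ = ∇·((∇K ∗ ρ) ρ) with initial datum ρ₀, i.e., for every ψ ∈ C¹_c([0,T); C¹_b(ℝ^d)), ∫₀^T ∫ ∂_t ψ(t,x) dρ(t)(x) dt − ∫₀^T ∫ ∇_x ψ(t,x) · (∇K ∗ ρ(t))(x) dρ(t)(x) dt + ∫ ψ(0,x) dρ₀(x)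 = 0. -/
open Set Filter Topology MeasureTheory BoundedContinuousFunction

/-!
Write the kinetic characteristics as `x' = v`, `ε v' = -v - (∇K ∗ ρ_ε)(x)`. Damping bounds `v` by
`|v₀| + M`, so the corrected position `x + ε v`, whose velocity is exactly `-(∇K ∗ ρ_ε)(x)`, stays
within `O(ε)` of `x` when `|v₀| ≤ R`. Let `X` be the mean-field flow of the aggregation equation.
Coupling `ρ_ε` and `ρ` through the common initial datum, the difference of the two fields at time
`t` is bounded by the largest deviation over `{|v₀| ≤ R}` plus the mass of `{|v₀| > R}`, and a
Grönwall inequality uniform over `{|v₀| ≤ R}` shows that `x` converges to `X` up to that mass.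
Letting `ε → 0` and then `R → ∞` gives uniform convergence on each `{|v₀| ≤ R}`, hence (a) and (b)
for `ρ t`, the image of `ρ₀` under `X t`, which solves the limit equation by the chain rule.

The flow `X` is an integral curve of a bounded Lipschitz field on the Banach space of bounded
continuous displacements `X - id`.
-/

section FamilyGronwall

variable {E ι : Type*} [NormedAddCommGroup E] [NormedSpace ℝ E] {z z' : ι → ℝ → E}

theorem iSup_norm_le_iSup_norm_add [Nonempty ι] {I : Set ℝ} {s t C : ℝ} (hI : Convex ℝ I)
    (hz : ∀ i, ∀ τ ∈ I, HasDerivWithinAt (z i) (z' i τ) I τ)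
    (hC : ∀ i, ∀ τ ∈ I, ‖z' i τ‖ ≤ C) (hs : s ∈ I) (ht : t ∈ I)
    (hbdd : BddAbove (range fun i ↦ ‖z i s‖)) :
    ⨆ i, ‖z i t‖ ≤ (⨆ i, ‖z i s‖) + C * |t - s| := by
  refine ciSup_le fun i ↦ ?_
  have hsub : ‖z i t - z i s‖ ≤ C * |t - s| :=
    hI.norm_image_sub_le_of_norm_hasDerivWithin_le (hz i) (hC i) hs ht
  linarith [norm_le_norm_add_norm_sub' (z i t) (z i s), le_ciSup hbdd i]

theorem le_gronwallBound_of_le_add_mul_sub {m : ℝ → ℝ} {a b δ K η C : ℝ}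
    (hm : ContinuousOn m (Icc a b)) (hδ : m a ≤ δ)
    (hincr : ∀ s ∈ Icc a b, ∀ u ∈ Icc s b, m u ≤ m s + (K * (m s + C * (u - s)) + η) * (u - s))
    {t : ℝ} (ht : t ∈ Icc a b) : m t ≤ gronwallBound δ K η (t - a) := by
  refine le_gronwallBound_of_liminf_deriv_right_le hm (fun s hs r hr ↦ ?_) hδ
    (fun _ _ ↦ le_rfl) t ht
  have hlim : Tendsto (fun u ↦ K * (m s + C * (u - s)) + η) (𝓝[>] s) (𝓝 (K * m s + η)) := by
    have : Continuous fun u ↦ K * (m s + C * (u - s)) + η := by fun_prop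
    simpa using (this.tendsto s).mono_left nhdsWithin_le_nhds
  refine Eventually.frequently ?_
  filter_upwards [hlim.eventually_lt_const hr, Ioo_mem_nhdsGT hs.2] with u hur hu
  refine lt_of_le_of_lt ?_ hur
  rw [inv_mul_le_iff₀ (sub_pos.2 hu.1)]
  linarith [hincr s (Ico_subset_Icc_self hs) u (Ioo_subset_Icc_self hu)]

/- The supremum of the norms is Lipschitz in time, so the scalar Grönwall inequality applies. -/
theorem norm_le_gronwallBound_of_family {a b δ K η C : ℝ}
    (hz : ∀ i, ∀ t ∈ Icc a b, HasDerivWithinAt (z i) (z' i t) (Icc a b) t)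
    (hC : ∀ i, ∀ t ∈ Icc a b, ‖z' i t‖ ≤ C) (hδ : ∀ i, ‖z i a‖ ≤ δ) (hK : 0 ≤ K)
    (hbound : ∀ t ∈ Icc a b, ∀ D, (∀ j, ‖z j t‖ ≤ D) → ∀ i, ‖z' i t‖ ≤ K * D + η)
    (i : ι) {t : ℝ} (ht : t ∈ Icc a b) : ‖z i t‖ ≤ gronwallBound δ K η (t - a) := by
  have : Nonempty ι := ⟨i⟩
  set m : ℝ → ℝ := fun s ↦ ⨆ j, ‖z j s‖
  have ha : a ∈ Icc a b := left_mem_Icc.2 (ht.1.trans ht.2)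
  have hC₀ : 0 ≤ C := (norm_nonneg _).trans (hC i a ha)
  have hbdd : ∀ s ∈ Icc a b, BddAbove (range fun j ↦ ‖z j s‖) := by
    refine fun s hs ↦ ⟨δ + C * (s - a), forall_mem_range.2 fun j ↦ ?_⟩
    have hsub := norm_image_sub_le_of_norm_deriv_le_segment' (hz j)
      (fun τ hτ ↦ hC j τ (Ico_subset_Icc_self hτ)) s hs
    linarith [norm_le_norm_add_norm_sub' (z j s) (z j a), hδ j]
  have hlip : ∀ s ∈ Icc a b, ∀ t ∈ Icc a b, m t ≤ m s + C * |t - s| := fun s hs t ht ↦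
    iSup_norm_le_iSup_norm_add (convex_Icc a b) hz hC hs ht (hbdd s hs)
  have hcont : ContinuousOn m (Icc a b) :=
    (LipschitzOnWith.of_le_add_mul ⟨C, hC₀⟩ fun t ht s hs ↦ hlip s hs t ht).continuousOn
  refine (le_ciSup (hbdd t ht) i).trans <|
    le_gronwallBound_of_le_add_mul_sub (C := C) hcont (ciSup_le hδ) (fun s hs u hu ↦ ?_) ht
  have hsub : Icc s u ⊆ Icc a b := Icc_subset_Icc hs.1 hu.2
  have hderiv : ∀ j, ∀ τ ∈ Icc s u, ‖z' j τ‖ ≤ K * (m s + C * (u - s)) + η := by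
    intro j τ hτ
    have hmτ : m τ ≤ m s + C * (u - s) := by
      refine (hlip s hs τ (hsub hτ)).trans ?_
      rw [abs_of_nonneg (sub_nonneg.2 hτ.1)]
      gcongr
      exact hτ.2
    exact hbound τ (hsub hτ) _ (fun k ↦ (le_ciSup (hbdd τ (hsub hτ)) k).trans hmτ) j
  simpa only [abs_of_nonneg (sub_nonneg.2 hu.1)] using iSup_norm_le_iSup_norm_add (convex_Icc s u)
    (fun j τ hτ ↦ (hz j τ (hsub hτ)).mono hsub) hderiv (left_mem_Icc.2 hu.1)
    (right_mem_Icc.2 hu.1) (hbdd s hs)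

theorem gronwallBound_eq_add (δ K η x : ℝ) :
    gronwallBound δ K η x = δ * Real.exp (K * x) + η * gronwallBound 0 K 1 x := by
  unfold gronwallBound
  split_ifs with hK
  · simp [hK]
  · ring

end FamilyGronwall

section OrdinaryDifferentialEquations

variable {E : Type*} [NormedAddCommGroup E] [NormedSpace ℝ E]

theorem exists_continuous_integralCurve_of_bounded_lipschitz [CompleteSpace E] {v : E → E}
    {K : NNReal} {M T : ℝ} (hv : ∀ x, ‖v x‖ ≤ M) (hLip : LipschitzWith K v) (hT : 0 ≤ T) (x₀ : E) :
    ∃ α : ℝ → E, Continuous α ∧ α 0 = x₀ ∧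
      ∀ t ∈ Icc 0 T, HasDerivWithinAt α (v (α t)) (Icc 0 T) t := by
  have hM : 0 ≤ M := (norm_nonneg _).trans (hv x₀)
  have hPL : IsPicardLindelof (fun _ ↦ v) (tmin := 0) (tmax := T) ⟨0, left_mem_Icc.2 hT⟩ x₀
      ⟨M * T, by positivity⟩ 0 ⟨M, hM⟩ K := by
    refine .of_time_independent (fun x _ ↦ hv x) hLip.lipschitzOnWith ?_
    simp only [sub_zero, sub_self, max_eq_left hT, NNReal.coe_zero]
    exact le_rfl
  obtain ⟨α, hα₀, hα⟩ := hPL.exists_eq_forall_mem_Icc_hasDerivWithinAt₀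
  have hcont : ContinuousOn α (Icc 0 T) := fun t ht ↦ (hα t ht).continuousWithinAt
  have heq : EqOn (fun t ↦ α (projIcc 0 T hT t)) α (Icc 0 T) := fun t ht ↦ by
    simp only [projIcc_of_mem hT ht]
  refine ⟨fun t ↦ α (projIcc 0 T hT t), hcont.domRestrict.comp continuous_projIcc,
    (heq (left_mem_Icc.2 hT)).trans hα₀, fun t ht ↦ ?_⟩
  simp only [heq ht]
  exact (hα t ht).congr heq (heq ht)

/- `V' = ε⁻¹ (-V - F)` means `(e^{t/ε} V)' = -ε⁻¹ e^{t/ε} F`. -/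
theorem norm_le_norm_zero_add_of_damped {V F : ℝ → E} {ε T M : ℝ} (hε : 0 < ε)
    (hF : ∀ t ∈ Icc 0 T, ‖F t‖ ≤ M)
    (hV : ∀ t ∈ Icc 0 T, HasDerivAt V (ε⁻¹ • (-V t - F t)) t) {t : ℝ} (ht : t ∈ Icc 0 T) :
    ‖V t‖ ≤ ‖V 0‖ + M := by
  have hexp : ∀ s, HasDerivAt (fun s ↦ Real.exp (s / ε)) (Real.exp (s / ε) * ε⁻¹) s := fun s ↦ by
    simpa [one_div] using ((hasDerivAt_id s).div_const ε).exp
  have hscaled : ∀ s ∈ Icc 0 T, HasDerivAt (fun s ↦ Real.exp (s / ε) • V s)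
      (-(Real.exp (s / ε) * ε⁻¹) • F s) s := fun s hs ↦
    ((hexp s).smul (hV s hs)).congr_deriv (by module)
  have hmajorant : ∀ s, HasDerivAt (fun s ↦ ‖V 0‖ + M * (Real.exp (s / ε) - 1))
      (M * (Real.exp (s / ε) * ε⁻¹)) s := fun s ↦
    (((hexp s).sub_const 1).const_mul M).const_add _
  have hle : ‖Real.exp (t / ε) • V t‖ ≤ ‖V 0‖ + M * (Real.exp (t / ε) - 1) :=
    image_norm_le_of_norm_deriv_right_le_deriv_boundary
      (fun s hs ↦ (hscaled s hs).continuousAt.continuousWithinAt)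
      (fun s hs ↦ (hscaled s (Ico_subset_Icc_self hs)).hasDerivWithinAt) (by simp) hmajorant
      (fun s hs ↦ by
        rw [norm_smul, norm_neg, Real.norm_of_nonneg (by positivity), mul_comm]
        gcongr
        exact hF s (Ico_subset_Icc_self hs)) ht
  have hexp_one : 1 ≤ Real.exp (t / ε) := Real.one_le_exp (div_nonneg ht.1 hε.le)
  have hM : 0 ≤ M := (norm_nonneg _).trans (hF t ht)
  rw [norm_smul, Real.norm_of_nonneg (Real.exp_pos _).le] at hle
  nlinarith [norm_nonneg (V 0), norm_nonneg (V t)]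

end OrdinaryDifferentialEquations

section Tails

variable {Q : Type*} [MeasurableSpace Q] (P : Measure Q) [IsFiniteMeasure P] {r : Q → ℝ}

theorem tendsto_measureReal_compl_sublevel_atTop (hr : Measurable r) :
    Tendsto (fun R ↦ P.real {q | r q ≤ R}ᶜ) atTop (𝓝 0) := by
  have hanti : Antitone fun R : ℝ ↦ {q | r q ≤ R}ᶜ :=
    fun R R' hRR' ↦ compl_subset_compl.2 fun q hq ↦ hq.trans hRR'
  have hempty : ⋂ R : ℝ, {q | r q ≤ R}ᶜ = ∅ :=
    eq_empty_of_forall_notMem fun q hq ↦ mem_iInter.1 hq (r q) (le_refl (r q))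
  have hlim := tendsto_measure_iInter_atTop (μ := P)
    (fun R ↦ (measurableSet_le hr measurable_const).compl.nullMeasurableSet) hanti
    ⟨0, measure_ne_top _ _⟩
  rw [hempty, measure_empty] at hlim
  exact (ENNReal.tendsto_toReal ENNReal.zero_ne_top).comp hlim

theorem exists_ge_mul_measureReal_compl_sublevel_lt (hr : Measurable r) (a R₀ : ℝ) {δ : ℝ}
    (hδ : 0 < δ) : ∃ R ≥ R₀, a * P.real {q | r q ≤ R}ᶜ < δ := by
  have hlim := (tendsto_measureReal_compl_sublevel_atTop P hr).const_mul a
  rw [mul_zero] at hlim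
  exact ((eventually_ge_atTop R₀).and (hlim.eventually_lt_const hδ)).exists

end Tails

section ConvolutionField

variable {E Q : Type*} [NormedAddCommGroup E] [NormedSpace ℝ E] [MeasurableSpace E]
  [MeasurableSpace Q] {g : E → E} {M : ℝ} {L : NNReal}

/-- The convolution `g ∗ μ` of a vector field with a measure, on an arbitrary normed space.
`interactionField` unfolds to its Euclidean case. -/
noncomputable def convField (g : E → E) (μ : Measure E) (x : E) : E :=
  ∫ y, g (x - y) ∂μ

theorem norm_convField_map_le (hb : ∀ z, ‖g z‖ ≤ M) (P : Measure Q) [IsProbabilityMeasure P]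
    {h : Q → E} (hh : Measurable h) (x : E) : ‖convField g (P.map h) x‖ ≤ M := by
  have := Measure.isProbabilityMeasure_map hh.aemeasurable (μ := P)
  simpa [convField] using
    norm_integral_le_of_norm_le_const (.of_forall fun y ↦ hb (x - y)) (μ := P.map h)

variable [BorelSpace E] [SecondCountableTopology E]

theorem convField_map (hg : Continuous g) (P : Measure Q) {h : Q → E} (hh : Measurable h) (x : E) :
    convField g (P.map h) x = ∫ q, g (x - h q) ∂P :=
  integral_map hh.aemeasurable (hg.comp (by fun_prop)).aestronglyMeasurable

theorem norm_convField_map_sub_le (hb : ∀ z, ‖g z‖ ≤ M) (hLip : LipschitzWith L g)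
    (P : Measure Q) [IsProbabilityMeasure P] {h k : Q → E} (hh : Measurable h) (hk : Measurable k)
    {S : Set Q} (hS : MeasurableSet S) {D : ℝ} (hD₀ : 0 ≤ D) (hD : ∀ q ∈ S, ‖h q - k q‖ ≤ D)
    (x y : E) :
    ‖convField g (P.map h) x - convField g (P.map k) y‖ ≤
      L * (‖x - y‖ + D) + 2 * M * P.real Sᶜ := by
  have hM : 0 ≤ M := (norm_nonneg _).trans (hb 0)
  have hint {f : Q → E} (hf : Measurable f) (z : E) : Integrable (fun q ↦ g (z - f q)) P :=
    .of_bound (hLip.continuous.measurable.comp (hf.const_sub z)).aestronglyMeasurable M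
      (.of_forall fun q ↦ hb _)
  have hpt (q : Q) : ‖g (x - h q) - g (y - k q)‖ ≤
      L * (‖x - y‖ + D) + Sᶜ.indicator (fun _ ↦ 2 * M) q := by
    by_cases hq : q ∈ S
    · rw [indicator_of_notMem (notMem_compl_iff.2 hq), add_zero]
      refine (hLip.norm_sub_le _ _).trans ?_
      gcongr
      rw [sub_sub_sub_comm]
      exact (norm_sub_le _ _).trans (by gcongr; exact hD q hq)
    · rw [indicator_of_mem (mem_compl hq)]
      have hlip : 0 ≤ L * (‖x - y‖ + D) := by positivity
      linarith [norm_sub_le (g (x - h q)) (g (y - k q)), hb (x - h q), hb (y - k q)]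
  have hbound : Integrable (Sᶜ.indicator fun _ ↦ 2 * M) P :=
    (integrable_const _).indicator hS.compl
  rw [convField_map hLip.continuous P hh, convField_map hLip.continuous P hk,
    ← integral_sub (hint hh x) (hint hk y)]
  refine (norm_integral_le_of_norm_le ((integrable_const _).add hbound)
    (.of_forall hpt)).trans_eq ?_
  simp only [Pi.add_apply]
  rw [integral_add (integrable_const _) hbound, integral_indicator_const _ hS.compl]
  simp [mul_comm]

theorem norm_convField_map_comp_sub_le (hb : ∀ z, ‖g z‖ ≤ M) (hLip : LipschitzWith L g)
    (P : Measure Q) [IsProbabilityMeasure P] {h k : Q → E} (hh : Measurable h) (hk : Measurable k)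
    {S : Set Q} (hS : MeasurableSet S) {D : ℝ} (hD : ∀ q ∈ S, ‖h q - k q‖ ≤ D) {q : Q}
    (hq : q ∈ S) :
    ‖convField g (P.map h) (h q) - convField g (P.map k) (k q)‖ ≤
      2 * L * D + 2 * M * P.real Sᶜ := by
  refine (norm_convField_map_sub_le hb hLip P hh hk hS ((norm_nonneg _).trans (hD q hq)) hD
    (h q) (k q)).trans ?_
  linarith [mul_le_mul_of_nonneg_left (hD q hq) L.coe_nonneg]

theorem lipschitzWith_convField (hb : ∀ z, ‖g z‖ ≤ M) (hLip : LipschitzWith L g) (μ : Measure E)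
    [IsProbabilityMeasure μ] : LipschitzWith L (convField g μ) :=
  .of_dist_le_mul fun x y ↦ by
    simpa [dist_eq_norm] using norm_convField_map_sub_le hb hLip μ measurable_id measurable_id
      .univ le_rfl (by simp) x y

/- A set of small mass changes the fields little, so uniform convergence of the maps on the sublevel
sets of a function suffices. -/
theorem tendstoUniformlyOn_convField_map {ι Y : Type*} {l : Filter ι} {I : Set Y}
    {h : ι → Y → Q → E} {h' : Y → Q → E} {r : Q → ℝ} (hb : ∀ z, ‖g z‖ ≤ M)
    (hLip : LipschitzWith L g) (P : Measure Q) [IsProbabilityMeasure P] (hr : Measurable r)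
    (hh : ∀ᶠ i in l, ∀ y, Measurable (h i y)) (hh' : ∀ y, Measurable (h' y))
    (hlim : ∀ R, TendstoUniformlyOn (fun i p ↦ h i p.1 p.2) (fun p ↦ h' p.1 p.2) l
      (I ×ˢ {q | r q ≤ R})) :
    TendstoUniformlyOn (fun i (p : Y × E) ↦ convField g (P.map (h i p.1)) p.2)
      (fun p ↦ convField g (P.map (h' p.1)) p.2) l (I ×ˢ univ) := by
  refine Metric.tendstoUniformlyOn_iff.2 fun δ hδ ↦ ?_
  obtain ⟨R, -, hR⟩ := exists_ge_mul_measureReal_compl_sublevel_lt P hr (2 * M) 0 (half_pos hδ)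
  obtain ⟨D, hD₀, hD⟩ := exists_pos_mul_lt (half_pos hδ) L
  filter_upwards [Metric.tendstoUniformlyOn_iff.1 (hlim R) D hD₀, hh] with i hi hhi p hp
  rw [dist_eq_norm]
  have hcoupling := norm_convField_map_sub_le hb hLip P (hh' p.1) (hhi p.1)
    (measurableSet_le hr measurable_const) hD₀.le
    (fun q hq ↦ (dist_eq_norm _ _).symm.trans_le (hi (p.1, q) ⟨hp.1, hq⟩).le) p.2 p.2
  rw [sub_self, norm_zero, zero_add] at hcoupling
  linarith

end ConvolutionField

section PushforwardIntegrals

variable {E Q : Type*} [TopologicalSpace E] [MeasurableSpace E] [OpensMeasurableSpace E]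
  [MeasurableSpace Q] (P : Measure Q) [IsFiniteMeasure P]

theorem tendsto_integral_map {ι : Type*} {l : Filter ι} [l.IsCountablyGenerated]
    {h : ι → Q → E} {h' : Q → E} (hh : ∀ᶠ i in l, Measurable (h i)) (hh' : Measurable h')
    (hlim : ∀ q, Tendsto (h · q) l (𝓝 (h' q))) (ψ : E →ᵇ ℝ) :
    Tendsto (fun i ↦ ∫ x, ψ x ∂(P.map (h i))) l (𝓝 (∫ x, ψ x ∂(P.map h'))) := by
  have hψ : StronglyMeasurable ψ := ψ.continuous.stronglyMeasurable
  rw [integral_map hh'.aemeasurable hψ.aestronglyMeasurable]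
  refine Tendsto.congr' (f₁ := fun i ↦ ∫ q, ψ (h i q) ∂P) ?_ ?_
  · filter_upwards [hh] with i hi
    rw [integral_map hi.aemeasurable hψ.aestronglyMeasurable]
  · exact tendsto_integral_filter_of_dominated_convergence (fun _ ↦ ‖ψ‖)
      (hh.mono fun i hi ↦ (hψ.comp_measurable hi).aestronglyMeasurable)
      (.of_forall fun i ↦ .of_forall fun q ↦ ψ.norm_coe_le_norm _) (integrable_const _)
      (.of_forall fun q ↦ (ψ.continuous.tendsto _).comp (hlim q))

theorem continuous_integral_map {F Y : Type*} [SecondCountableTopology E] [NormedAddCommGroup F]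
    [NormedSpace ℝ F] [TopologicalSpace Y] [FirstCountableTopology Y] {h : Y → Q → E}
    (hh : ∀ y, Measurable (h y)) (hhc : ∀ q, Continuous fun y ↦ h y q) {c : Y × E → F}
    (hc : Continuous c) {C : ℝ} (hC : ∀ p, ‖c p‖ ≤ C) :
    Continuous fun y ↦ ∫ x, c (y, x) ∂(P.map (h y)) := by
  have hcy (y : Y) : StronglyMeasurable fun x ↦ c (y, x) :=
    (hc.comp (Continuous.prodMk_right y)).stronglyMeasurable
  simp only [fun y ↦ integral_map (hh y).aemeasurable (hcy y).aestronglyMeasurable (μ := P)]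
  exact continuous_of_dominated (fun y ↦ ((hcy y).comp_measurable (hh y)).aestronglyMeasurable)
    (fun y ↦ .of_forall fun q ↦ hC _) (integrable_const C)
    (.of_forall fun q ↦ hc.comp (continuous_id.prodMk (hhc q)))

end PushforwardIntegrals

section AggregationFlow

variable {E : Type*} [NormedAddCommGroup E] [NormedSpace ℝ E] [MeasurableSpace E]
  {g : E → E} {M T : ℝ} {L : NNReal} {μ : Measure E} {X : ℝ → E → E}

/-- `X` is the characteristic flow on `[0, T]` of the aggregation equation `∂ₜρ = ∇·((g ∗ ρ) ρ)`
started at `μ`: particles move with velocity `-(g ∗ ρ t)`, where `ρ t = μ.map (X t)` is their own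
distribution. Continuity is asked for all times, so that `t ↦ ∫ c (t, x) ∂(ρ t)` is continuous
on `ℝ`. -/
structure IsAggregationFlow (g : E → E) (T : ℝ) (μ : Measure E) (X : ℝ → E → E) : Prop where
  continuous_uncurry : Continuous (Function.uncurry X)
  initial : ∀ x, X 0 x = x
  hasDerivWithinAt : ∀ x, ∀ t ∈ Icc 0 T,
    HasDerivWithinAt (X · x) (-convField g (μ.map (X t)) (X t x)) (Icc 0 T) t

variable [BorelSpace E]

theorem IsAggregationFlow.measurable (hX : IsAggregationFlow g T μ X) (t : ℝ) :
    Measurable (X t) :=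
  (hX.continuous_uncurry.comp (Continuous.prodMk_right t)).measurable

theorem IsAggregationFlow.map_map_fst {f₀ : Measure (E × E)}
    (hX : IsAggregationFlow g T (f₀.map Prod.fst) X) (t : ℝ) :
    (f₀.map Prod.fst).map (X t) = f₀.map fun p ↦ X t p.1 :=
  Measure.map_map (hX.measurable t) measurable_fst

theorem IsAggregationFlow.isProbabilityMeasure_map [IsProbabilityMeasure μ]
    (hX : IsAggregationFlow g T μ X) (t : ℝ) : IsProbabilityMeasure (μ.map (X t)) :=
  Measure.isProbabilityMeasure_map (hX.measurable t).aemeasurable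

theorem IsAggregationFlow.norm_sub_le [IsProbabilityMeasure μ] (hX : IsAggregationFlow g T μ X)
    (hb : ∀ z, ‖g z‖ ≤ M) {t : ℝ} (ht : t ∈ Icc 0 T) (x : E) : ‖X t x - x‖ ≤ M * t := by
  have hspeed : ∀ s ∈ Ico 0 T, ‖-convField g (μ.map (X s)) (X s x)‖ ≤ M := fun s _ ↦ by
    simpa only [norm_neg] using norm_convField_map_le hb μ (hX.measurable s) (X s x)
  simpa only [hX.initial, sub_zero] using
    norm_image_sub_le_of_norm_deriv_le_segment' (hX.hasDerivWithinAt x) hspeed t ht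

theorem IsAggregationFlow.map_norm_gt_eq_zero [IsProbabilityMeasure μ]
    (hX : IsAggregationFlow g T μ X) (hb : ∀ z, ‖g z‖ ≤ M) {R : ℝ} (hμ : μ {x | R < ‖x‖} = 0)
    {t : ℝ} (ht : t ∈ Icc 0 T) : μ.map (X t) {x | R + M * t < ‖x‖} = 0 := by
  rw [Measure.map_apply (hX.measurable t) (measurableSet_lt measurable_const measurable_norm)]
  refine measure_mono_null (fun x (hx : R + M * t < ‖X t x‖) ↦ ?_) hμ
  change R < ‖x‖
  linarith [norm_le_norm_add_norm_sub' (X t x) x, hX.norm_sub_le hb ht x]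

variable [SecondCountableTopology E]

/-- The velocity field, on the Banach space of bounded displacements `W = X - id`, of the mean-field
system: `W ↦ -(g ∗ ((id + W)# μ)) ∘ (id + W)`. -/
noncomputable def displacementVelocity (hb : ∀ z, ‖g z‖ ≤ M) (hLip : LipschitzWith L g)
    (μ : Measure E) [IsProbabilityMeasure μ] (W : E →ᵇ E) : E →ᵇ E :=
  have hW : Continuous fun x ↦ x + W x := continuous_id.add W.continuous
  have : IsProbabilityMeasure (μ.map fun x ↦ x + W x) :=
    Measure.isProbabilityMeasure_map hW.measurable.aemeasurable
  .ofNormedAddCommGroup (fun x ↦ -convField g (μ.map fun x ↦ x + W x) (x + W x))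
    ((lipschitzWith_convField hb hLip _).continuous.comp hW).neg M
    fun x ↦ by simpa only [norm_neg] using norm_convField_map_le hb μ hW.measurable _

theorem displacementVelocity_apply (hb : ∀ z, ‖g z‖ ≤ M) (hLip : LipschitzWith L g)
    (μ : Measure E) [IsProbabilityMeasure μ] (W : E →ᵇ E) (x : E) :
    displacementVelocity hb hLip μ W x = -convField g (μ.map fun x ↦ x + W x) (x + W x) :=
  rfl

theorem norm_displacementVelocity_le (hb : ∀ z, ‖g z‖ ≤ M) (hLip : LipschitzWith L g)
    (μ : Measure E) [IsProbabilityMeasure μ] (W : E →ᵇ E) :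
    ‖displacementVelocity hb hLip μ W‖ ≤ M :=
  norm_ofNormedAddCommGroup_le _ ((norm_nonneg _).trans (hb 0)) fun x ↦ by
    simpa only [norm_neg] using
      norm_convField_map_le hb μ (h := fun x ↦ x + W x)
        (continuous_id.add W.continuous).measurable _

theorem lipschitzWith_displacementVelocity (hb : ∀ z, ‖g z‖ ≤ M) (hLip : LipschitzWith L g)
    (μ : Measure E) [IsProbabilityMeasure μ] :
    LipschitzWith (2 * L) (displacementVelocity hb hLip μ) := by
  refine .of_dist_le_mul fun W W' ↦ (dist_le (by positivity)).2 fun x ↦ ?_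
  have hWW' (y : E) : ‖(y + W y) - (y + W' y)‖ ≤ dist W W' := by
    rw [add_sub_add_left_eq_sub, ← dist_eq_norm]
    exact dist_coe_le_dist y
  rw [displacementVelocity_apply, displacementVelocity_apply, dist_neg_neg, dist_eq_norm]
  simpa using norm_convField_map_comp_sub_le hb hLip μ (h := fun y ↦ y + W y)
    (k := fun y ↦ y + W' y) (continuous_id.add W.continuous).measurable
    (continuous_id.add W'.continuous).measurable .univ (fun y _ ↦ hWW' y) (mem_univ x)

theorem exists_isAggregationFlow [CompleteSpace E] (hb : ∀ z, ‖g z‖ ≤ M)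
    (hLip : LipschitzWith L g) (hT : 0 ≤ T) (μ : Measure E) [IsProbabilityMeasure μ] :
    ∃ X, IsAggregationFlow g T μ X := by
  obtain ⟨W, hW, hW₀, hW'⟩ := exists_continuous_integralCurve_of_bounded_lipschitz
    (norm_displacementVelocity_le hb hLip μ) (lipschitzWith_displacementVelocity hb hLip μ) hT 0
  refine ⟨fun t x ↦ x + W t x, ?_, fun x ↦ by simp [hW₀], fun x t ht ↦ ?_⟩
  · exact continuous_snd.add (continuous_eval.comp (hW.prodMap continuous_id))
  · exact ((evalCLM ℝ x).hasFDerivAt.comp_hasDerivWithinAt t (hW' t ht)).const_add x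

theorem IsAggregationFlow.continuous_integral [IsFiniteMeasure μ]
    (hX : IsAggregationFlow g T μ X) {c : ℝ × E → ℝ} (hc : Continuous c) {C : ℝ}
    (hC : ∀ p, ‖c p‖ ≤ C) :
    Continuous fun t ↦ ∫ x, c (t, x) ∂(μ.map (X t)) :=
  continuous_integral_map μ hX.measurable
    (fun x ↦ hX.continuous_uncurry.comp (Continuous.prodMk_left x)) hc hC

theorem IsAggregationFlow.continuous_convField [IsFiniteMeasure μ]
    (hX : IsAggregationFlow g T μ X) (hb : ∀ z, ‖g z‖ ≤ M) (hg : Continuous g) :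
    Continuous fun p : ℝ × E ↦ convField g (μ.map (X p.1)) p.2 :=
  continuous_integral_map μ (h := fun p : ℝ × E ↦ X p.1) (fun p ↦ hX.measurable p.1)
    (fun x ↦ hX.continuous_uncurry.comp (continuous_fst.prodMk continuous_const))
    (c := fun q : (ℝ × E) × E ↦ g (q.1.2 - q.2)) (hg.comp (by fun_prop)) fun q ↦ hb _

end AggregationFlow

section WeakSolution

variable {E : Type*} [NormedAddCommGroup E] [NormedSpace ℝ E] [MeasurableSpace E]
  {g : E → E} {M T : ℝ} {μ : Measure E} {X : ℝ → E → E}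

/-- Weak solutions of `∂ₜρ = ∇·((g ∗ ρ) ρ)`, `ρ(0) = ρ₀`, tested against
`ψ ∈ C¹_c([0, T); C¹_b(E))`. Test functions are given on all of `ℝ × E`, and `fderiv ℝ ψ (t, x)`
applied to `(1, 0)` and `(0, w)` is `∂ₜψ` and `∇ₓψ · w`. -/
def IsAggregationWeakSolution (g : E → E) (T : ℝ) (ρ₀ : Measure E) (ρ : ℝ → Measure E) : Prop :=
  ∀ ψ : ℝ × E → ℝ, ContDiff ℝ 1 ψ →
    (∃ T' : ℝ, T' < T ∧ ∀ t, T' ≤ t → ∀ x, ψ (t, x) = 0) →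
    (∃ C : ℝ, ∀ p, |ψ p| ≤ C ∧ ‖fderiv ℝ ψ p‖ ≤ C) →
    (∫ t in (0 : ℝ)..T, ∫ x, fderiv ℝ ψ (t, x) (1, 0) ∂(ρ t)) -
      (∫ t in (0 : ℝ)..T, ∫ x, fderiv ℝ ψ (t, x) (0, convField g (ρ t) x) ∂(ρ t)) +
      (∫ x, ψ (0, x) ∂ρ₀) = 0

theorem IsAggregationFlow.hasDerivAt_comp (hX : IsAggregationFlow g T μ X) {ψ : ℝ × E → ℝ}
    (hψ : Differentiable ℝ ψ) {t : ℝ} (ht : t ∈ Ioo 0 T) (x : E) :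
    HasDerivAt (fun t ↦ ψ (t, X t x))
      (fderiv ℝ ψ (t, X t x) (1, -convField g (μ.map (X t)) (X t x))) t :=
  (hψ _).hasFDerivAt.comp_hasDerivAt t <| (hasDerivAt_id t).prodMk <|
    (hX.hasDerivWithinAt x t (Ioo_subset_Icc_self ht)).hasDerivAt (Icc_mem_nhds ht.1 ht.2)

variable [BorelSpace E] [SecondCountableTopology E] [IsProbabilityMeasure μ] {ψ : ℝ × E → ℝ}
  {C : ℝ}

theorem IsAggregationFlow.hasDerivAt_integral (hX : IsAggregationFlow g T μ X)
    (hb : ∀ z, ‖g z‖ ≤ M) (hg : Continuous g) (hψ : ContDiff ℝ 1 ψ)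
    (hC : ∀ p, |ψ p| ≤ C ∧ ‖fderiv ℝ ψ p‖ ≤ C) {t : ℝ} (ht : t ∈ Ioo 0 T) :
    HasDerivAt (fun t ↦ ∫ x, ψ (t, x) ∂(μ.map (X t)))
      (∫ x, fderiv ℝ ψ (t, x) (1, -convField g (μ.map (X t)) x) ∂(μ.map (X t))) t := by
  set c : ℝ × E → ℝ := fun p ↦ fderiv ℝ ψ p (1, -convField g (μ.map (X p.1)) p.2)
  have hc : Continuous c := (hψ.continuous_fderiv one_ne_zero).clm_apply
    (continuous_const.prodMk (hX.continuous_convField hb hg).neg)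
  have hcC (p : ℝ × E) : ‖c p‖ ≤ C * max 1 M := by
    refine (fderiv ℝ ψ p).le_of_opNorm_le_of_le (hC p).2 (max_le_max norm_one.le ?_)
    simpa only [norm_neg] using norm_convField_map_le hb μ (hX.measurable _) _
  have hpush {φ : ℝ × E → ℝ} (hφ : Continuous φ) (s : ℝ) :
      ∫ x, φ (s, x) ∂(μ.map (X s)) = ∫ x, φ (s, X s x) ∂μ :=
    integral_map (hX.measurable s).aemeasurable
      (hφ.comp (Continuous.prodMk_right s)).aestronglyMeasurable
  have hmeas {φ : ℝ × E → ℝ} (hφ : Continuous φ) (s : ℝ) :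
      AEStronglyMeasurable (fun x ↦ φ (s, X s x)) μ :=
    (hφ.comp (continuous_const.prodMk
      (hX.continuous_uncurry.comp (Continuous.prodMk_right s)))).aestronglyMeasurable
  rw [funext (hpush hψ.continuous), hpush hc t]
  exact (hasDerivAt_integral_of_dominated_loc_of_deriv_le (F' := fun s x ↦ c (s, X s x))
    (Ioo_mem_nhds ht.1 ht.2) (.of_forall (hmeas hψ.continuous))
    (.of_bound (hmeas hψ.continuous t) C (.of_forall fun x ↦ (hC _).1)) (hmeas hc t)
    (.of_forall fun x s _ ↦ hcC _) (integrable_const _)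
    (.of_forall fun x s hs ↦ hX.hasDerivAt_comp (hψ.differentiable one_ne_zero) hs x)).2

theorem IsAggregationFlow.isAggregationWeakSolution (hX : IsAggregationFlow g T μ X)
    (hb : ∀ z, ‖g z‖ ≤ M) (hg : Continuous g) (hT : 0 ≤ T) :
    IsAggregationWeakSolution g T μ fun t ↦ μ.map (X t) := by
  rintro ψ hψ ⟨T', hT', hψT⟩ ⟨C, hC⟩
  set cₜ : ℝ × E → ℝ := fun p ↦ fderiv ℝ ψ p (1, 0)
  set cₓ : ℝ × E → ℝ := fun p ↦ fderiv ℝ ψ p (0, convField g (μ.map (X p.1)) p.2)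
  have hcₜ : Continuous cₜ := (hψ.continuous_fderiv one_ne_zero).clm_apply continuous_const
  have hcₓ : Continuous cₓ := (hψ.continuous_fderiv one_ne_zero).clm_apply
    (continuous_const.prodMk (hX.continuous_convField hb hg))
  have hcₜC (p : ℝ × E) : ‖cₜ p‖ ≤ C * ‖((1, 0) : ℝ × E)‖ :=
    (fderiv ℝ ψ p).le_of_opNorm_le (hC p).2 _
  have hcₓC (p : ℝ × E) : ‖cₓ p‖ ≤ C * max 0 M :=
    (fderiv ℝ ψ p).le_of_opNorm_le_of_le (hC p).2
      (max_le_max norm_zero.le (norm_convField_map_le hb μ (hX.measurable _) _))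
  have hintegrable {c : ℝ × E → ℝ} (hc : Continuous c) {B : ℝ} (hB : ∀ p, ‖c p‖ ≤ B) (t : ℝ) :
      Integrable (fun x ↦ c (t, x)) (μ.map (X t)) :=
    have := hX.isProbabilityMeasure_map t
    .of_bound (hc.comp (Continuous.prodMk_right t)).aestronglyMeasurable B
      (.of_forall fun x ↦ hB _)
  have hderiv (t : ℝ) (ht : t ∈ Ioo 0 T) : HasDerivAt (fun t ↦ ∫ x, ψ (t, x) ∂(μ.map (X t)))
      ((∫ x, cₜ (t, x) ∂(μ.map (X t))) - ∫ x, cₓ (t, x) ∂(μ.map (X t))) t := by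
    refine (hX.hasDerivAt_integral hb hg hψ hC ht).congr_deriv ?_
    rw [← integral_sub (hintegrable hcₜ hcₜC t) (hintegrable hcₓ hcₓC t)]
    simp [cₜ, cₓ, ← map_sub]
  have hIₜ := hX.continuous_integral hcₜ hcₜC
  have hIₓ := hX.continuous_integral hcₓ hcₓC
  have hftc := intervalIntegral.integral_eq_sub_of_hasDerivAt_of_le hT
    (hX.continuous_integral hψ.continuous fun p ↦ (hC p).1).continuousOn hderiv
    ((hIₜ.sub hIₓ).intervalIntegrable 0 T)
  rw [intervalIntegral.integral_sub (hIₜ.intervalIntegrable 0 T) (hIₓ.intervalIntegrable 0 T)]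
    at hftc
  rw [hftc]
  simp [hψT T hT'.le, funext hX.initial]

end WeakSolution

section InertialFlow

variable {E : Type*} [NormedAddCommGroup E] [NormedSpace ℝ E] [MeasurableSpace E]
  {g : E → E} {M T ε : ℝ} {L : NNReal} {f₀ : Measure (E × E)} {Φ : ℝ → E × E → E × E}
  {X : ℝ → E → E}

/-- `Φ` is a flow of the characteristic system `x' = v`, `ε v' = -v - (g ∗ ρ)(x)` on `[0, T]` in
the self-consistent case where `ρ t` is the first marginal of `f₀.map (Φ t)`. -/
structure IsInertialFlow (g : E → E) (ε T : ℝ) (f₀ : Measure (E × E)) (Φ : ℝ → E × E → E × E) :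
    Prop where
  measurable : ∀ t, Measurable (Φ t)
  initial : ∀ p, Φ 0 p = p
  hasDerivAt_fst : ∀ p, ∀ t ∈ Icc 0 T, HasDerivAt (fun s ↦ (Φ s p).1) (Φ t p).2 t
  hasDerivAt_snd : ∀ p, ∀ t ∈ Icc 0 T, HasDerivAt (fun s ↦ (Φ s p).2)
    (ε⁻¹ • (-(Φ t p).2 - convField g (f₀.map fun q ↦ (Φ t q).1) (Φ t p).1)) t

/-- Measure solutions of the kinetic equation on an arbitrary normed space: push-forwards of the
initial datum along a self-consistent flow. `IsKineticMeasureSolution` is the Euclidean case. -/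
def IsKineticSolution_s12 (g : E → E) (ε T : ℝ) (f₀ : Measure (E × E)) (f : ℝ → Measure (E × E)) :
    Prop :=
  ∃ Φ, IsInertialFlow g ε T f₀ Φ ∧ ∀ t ∈ Icc 0 T, f t = f₀.map (Φ t)

theorem IsInertialFlow.map_fst_map (hΦ : IsInertialFlow g ε T f₀ Φ) (t : ℝ) :
    (f₀.map (Φ t)).map Prod.fst = f₀.map fun p ↦ (Φ t p).1 :=
  Measure.map_map measurable_fst (hΦ.measurable t)

theorem IsInertialFlow.norm_snd_le [IsProbabilityMeasure f₀] (hΦ : IsInertialFlow g ε T f₀ Φ)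
    (hε : 0 < ε) (hb : ∀ z, ‖g z‖ ≤ M) {t : ℝ} (ht : t ∈ Icc 0 T) (p : E × E) :
    ‖(Φ t p).2‖ ≤ ‖p.2‖ + M := by
  simpa only [hΦ.initial] using norm_le_norm_zero_add_of_damped hε
    (fun s _ ↦ norm_convField_map_le hb f₀ (hΦ.measurable s).fst _) (hΦ.hasDerivAt_snd p) ht

/- The corrected position `x + ε v` has no inertia left: its velocity is the field itself. -/
theorem IsInertialFlow.hasDerivAt_fst_add_smul_snd (hΦ : IsInertialFlow g ε T f₀ Φ) (hε : ε ≠ 0)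
    (p : E × E) {t : ℝ} (ht : t ∈ Icc 0 T) :
    HasDerivAt (fun s ↦ (Φ s p).1 + ε • (Φ s p).2)
      (-convField g (f₀.map fun q ↦ (Φ t q).1) (Φ t p).1) t := by
  refine ((hΦ.hasDerivAt_fst p t ht).add ((hΦ.hasDerivAt_snd p t ht).const_smul ε)).congr_deriv ?_
  rw [smul_inv_smul₀ hε]
  abel

theorem IsInertialFlow.norm_fst_sub_le_add_norm [IsProbabilityMeasure f₀]
    (hΦ : IsInertialFlow g ε T f₀ Φ) (hε : 0 < ε) (hb : ∀ z, ‖g z‖ ≤ M) {t : ℝ}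
    (ht : t ∈ Icc 0 T) (p : E × E) (y : E) :
    ‖(Φ t p).1 - y‖ ≤ ε * (‖p.2‖ + M) + ‖(Φ t p).1 + ε • (Φ t p).2 - y‖ := by
  have hv : ‖ε • (Φ t p).2‖ ≤ ε * (‖p.2‖ + M) := by
    rw [norm_smul, Real.norm_of_nonneg hε.le]
    gcongr
    exact hΦ.norm_snd_le hε hb ht p
  calc ‖(Φ t p).1 - y‖ = ‖((Φ t p).1 + ε • (Φ t p).2 - y) - ε • (Φ t p).2‖ := by congr 1; abel
    _ ≤ ‖(Φ t p).1 + ε • (Φ t p).2 - y‖ + ‖ε • (Φ t p).2‖ := norm_sub_le _ _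
    _ ≤ ε * (‖p.2‖ + M) + ‖(Φ t p).1 + ε • (Φ t p).2 - y‖ := by linarith

variable [BorelSpace E] [SecondCountableTopology E] [IsProbabilityMeasure f₀]

theorem IsInertialFlow.norm_fst_sub_le (hΦ : IsInertialFlow g ε T f₀ Φ)
    (hX : IsAggregationFlow g T (f₀.map Prod.fst) X) (hε : 0 < ε) (hb : ∀ z, ‖g z‖ ≤ M)
    (hLip : LipschitzWith L g) {R : ℝ} {p : E × E} (hp : ‖p.2‖ ≤ R) {t : ℝ} (ht : t ∈ Icc 0 T) :
    ‖(Φ t p).1 - X t p.1‖ ≤ ε * (R + M) + gronwallBound (ε * R) (2 * L)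
      (2 * L * (ε * (R + M)) + 2 * M * f₀.real {q | ‖q.2‖ ≤ R}ᶜ) t := by
  set S : Set (E × E) := {q | ‖q.2‖ ≤ R}
  have hS : MeasurableSet S := measurableSet_le measurable_snd.norm measurable_const
  have hXm (s : ℝ) : Measurable fun q : E × E ↦ X s q.1 := (hX.measurable s).comp measurable_fst
  set z : S → ℝ → E := fun q s ↦ (Φ s q).1 + ε • (Φ s q).2 - X s (q : E × E).1
  set z' : S → ℝ → E := fun q s ↦ convField g (f₀.map fun q ↦ X s q.1) (X s (q : E × E).1) -
    convField g (f₀.map fun q ↦ (Φ s q).1) (Φ s q).1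
  have hz (q : S) (s : ℝ) (hs : s ∈ Icc 0 T) : HasDerivWithinAt (z q) (z' q s) (Icc 0 T) s := by
    refine ((hΦ.hasDerivAt_fst_add_smul_snd hε.ne' q hs).hasDerivWithinAt.sub
      (hX.hasDerivWithinAt (q : E × E).1 s hs)).congr_deriv ?_
    rw [neg_sub_neg, hX.map_map_fst]
  have hz'M (q : S) (s : ℝ) (_ : s ∈ Icc 0 T) : ‖z' q s‖ ≤ M + M :=
    (norm_sub_le _ _).trans (add_le_add (norm_convField_map_le hb f₀ (hXm s) _)
      (norm_convField_map_le hb f₀ (hΦ.measurable s).fst _))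
  have hz₀ (q : S) : ‖z q 0‖ ≤ ε * R := by
    simp only [z, hΦ.initial, hX.initial, add_sub_cancel_left, norm_smul,
      Real.norm_of_nonneg hε.le]
    gcongr
    exact q.2
  have hdist {s : ℝ} (hs : s ∈ Icc 0 T) (q : S) :
      ‖(Φ s q).1 - X s (q : E × E).1‖ ≤ ε * (R + M) + ‖z q s‖ :=
    (hΦ.norm_fst_sub_le_add_norm hε hb hs q _).trans (by gcongr; exact q.2)
  have hbound (s : ℝ) (hs : s ∈ Icc 0 T) (D : ℝ) (hD : ∀ q, ‖z q s‖ ≤ D) (q : S) :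
      ‖z' q s‖ ≤ 2 * L * D + (2 * L * (ε * (R + M)) + 2 * M * f₀.real Sᶜ) := by
    have hD' : ∀ q ∈ S, ‖X s q.1 - (Φ s q).1‖ ≤ ε * (R + M) + D := fun q hq ↦ by
      rw [norm_sub_rev]
      exact (hdist hs ⟨q, hq⟩).trans (add_le_add_right (hD _) _)
    calc ‖z' q s‖ ≤ 2 * L * (ε * (R + M) + D) + 2 * M * f₀.real Sᶜ :=
          norm_convField_map_comp_sub_le hb hLip f₀ (hXm s) (hΦ.measurable s).fst hS hD' q.2
      _ = 2 * L * D + (2 * L * (ε * (R + M)) + 2 * M * f₀.real Sᶜ) := by ring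
  refine (hdist ht ⟨p, hp⟩).trans (add_le_add_right ?_ _)
  simpa only [sub_zero] using
    norm_le_gronwallBound_of_family hz hz'M hz₀ (by positivity) hbound ⟨p, hp⟩ ht

theorem tendstoUniformlyOn_fst_of_isInertialFlow {Φ : ℝ → ℝ → E × E → E × E}
    (hΦ : ∀ ε > 0, IsInertialFlow g ε T f₀ (Φ ε)) (hX : IsAggregationFlow g T (f₀.map Prod.fst) X)
    (hb : ∀ z, ‖g z‖ ≤ M) (hLip : LipschitzWith L g) (R : ℝ) :
    TendstoUniformlyOn (fun ε (q : ℝ × (E × E)) ↦ (Φ ε q.1 q.2).1) (fun q ↦ X q.1 q.2.1)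
      (𝓝[>] 0) (Icc 0 T ×ˢ {p | ‖p.2‖ ≤ R}) := by
  have hM : 0 ≤ M := (norm_nonneg _).trans (hb 0)
  refine Metric.tendstoUniformlyOn_iff.2 fun δ hδ ↦ ?_
  obtain ⟨R', hRR', hR'⟩ := exists_ge_mul_measureReal_compl_sublevel_lt f₀ measurable_snd.norm
    (2 * M * gronwallBound 0 (2 * L) 1 T) R hδ
  set m := f₀.real {q | ‖q.2‖ ≤ R'}ᶜ
  set b : ℝ → ℝ := fun ε ↦ ε * (R' + M) +
    gronwallBound (ε * R') (2 * L) (2 * L * (ε * (R' + M)) + 2 * M * m) T with hb_def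
  have hlim : Tendsto b (𝓝[>] 0) (𝓝 (2 * M * gronwallBound 0 (2 * L) 1 T * m)) := by
    have hcont : Continuous b := by
      simp only [hb_def, gronwallBound_eq_add (_ * R')]
      fun_prop
    have hb₀ : b 0 = 2 * M * gronwallBound 0 (2 * L) 1 T * m := by
      simp only [hb_def, gronwallBound_eq_add (_ * R')]
      ring
    exact hb₀ ▸ (hcont.tendsto 0).mono_left nhdsWithin_le_nhds
  filter_upwards [hlim.eventually_lt_const hR', self_mem_nhdsWithin] with ε hbε hε q hq
  have hR'₀ : 0 ≤ R' := (norm_nonneg _).trans (hq.2.trans hRR')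
  have hε₀ : 0 ≤ ε := le_of_lt hε
  rw [dist_comm, dist_eq_norm]
  refine ((hΦ ε hε).norm_fst_sub_le hX hε hb hLip (hq.2.trans hRR') hq.1).trans_lt <|
    lt_of_le_of_lt (add_le_add_right (gronwallBound_mono ?_ ?_ ?_ hq.1.2) _) hbε <;> positivity

end InertialFlow

theorem macroscopic_limit_kinetic_aggregation_general {E : Type*} [NormedAddCommGroup E]
    [NormedSpace ℝ E] [CompleteSpace E] [MeasurableSpace E] [BorelSpace E]
    [SecondCountableTopology E] {g : E → E} {T M : ℝ} {L : NNReal} (hT : 0 ≤ T)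
    (hb : ∀ z, ‖g z‖ ≤ M) (hLip : LipschitzWith L g) (f₀ : Measure (E × E))
    [IsProbabilityMeasure f₀] (f : ℝ → ℝ → Measure (E × E))
    (hf : ∀ ε > 0, IsKineticSolution_s12 g ε T f₀ (f ε)) :
    ∃ ρ : ℝ → Measure E,
      (∀ t, IsProbabilityMeasure (ρ t)) ∧
      (∀ R₀ : ℝ, f₀ {p | R₀ < ‖p.1‖} = 0 → ∀ t ∈ Icc 0 T, ρ t {x | R₀ + M * t < ‖x‖} = 0) ∧
      (∀ ψ : E →ᵇ ℝ, ContinuousOn (fun t ↦ ∫ x, ψ x ∂(ρ t)) (Icc 0 T)) ∧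
      (∀ t ∈ Icc 0 T, ∀ ψ : E →ᵇ ℝ,
        Tendsto (fun ε ↦ ∫ x, ψ x ∂((f ε t).map Prod.fst)) (𝓝[>] 0) (𝓝 (∫ x, ψ x ∂(ρ t)))) ∧
      TendstoUniformlyOn (fun ε (p : ℝ × E) ↦ convField g ((f ε p.1).map Prod.fst) p.2)
        (fun p ↦ convField g (ρ p.1) p.2) (𝓝[>] 0) (Icc 0 T ×ˢ univ) ∧
      IsAggregationWeakSolution g T (f₀.map Prod.fst) ρ := by
  choose! Φ hΦ hfΦ using hf
  have hρ₀ : IsProbabilityMeasure (f₀.map Prod.fst) :=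
    Measure.isProbabilityMeasure_map measurable_fst.aemeasurable
  obtain ⟨X, hX⟩ := exists_isAggregationFlow hb hLip hT (f₀.map Prod.fst)
  have hlim := tendstoUniformlyOn_fst_of_isInertialFlow hΦ hX hb hLip
  have hmeas : ∀ᶠ ε in 𝓝[>] (0 : ℝ), ∀ t, Measurable fun p ↦ (Φ ε t p).1 :=
    eventually_mem_nhdsWithin.mono fun ε hε t ↦ ((hΦ ε hε).measurable t).fst
  have hXm (t : ℝ) : Measurable fun p : E × E ↦ X t p.1 := (hX.measurable t).comp measurable_fst
  have hρε {ε : ℝ} (hε : 0 < ε) {t : ℝ} (ht : t ∈ Icc 0 T) :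
      (f ε t).map Prod.fst = f₀.map fun p ↦ (Φ ε t p).1 := by
    rw [hfΦ ε hε t ht, (hΦ ε hε).map_fst_map]
  refine ⟨fun t ↦ (f₀.map Prod.fst).map (X t), hX.isProbabilityMeasure_map, fun R₀ hR₀ t ht ↦ ?_,
    fun ψ ↦ ?_, fun t ht ψ ↦ ?_, ?_, hX.isAggregationWeakSolution hb hLip.continuous hT⟩
  · refine hX.map_norm_gt_eq_zero hb ?_ ht
    rwa [Measure.map_apply measurable_fst (measurableSet_lt measurable_const measurable_norm)]
  · exact (hX.continuous_integral (ψ.continuous.comp continuous_snd)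
      fun p ↦ ψ.norm_coe_le_norm p.2).continuousOn
  · simp only [hX.map_map_fst]
    refine (tendsto_integral_map f₀ (hmeas.mono fun ε hε ↦ hε t) (hXm t)
      (fun p ↦ (hlim ‖p.2‖).tendsto_at (x := (t, p)) ⟨ht, le_refl ‖p.2‖⟩) ψ).congr' ?_
    filter_upwards [self_mem_nhdsWithin] with ε hε
    rw [hρε hε ht]
  · simp only [hX.map_map_fst]
    refine (tendstoUniformlyOn_convField_map hb hLip f₀ measurable_snd.norm hmeas hXm hlim).congr ?_
    filter_upwards [self_mem_nhdsWithin] with ε hε p hp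
    simp only [hρε hε hp.1]

theorem IsKineticMeasureSolution.isKineticSolution {d : ℕ}
    {gradK : EuclideanSpace ℝ (Fin d) → EuclideanSpace ℝ (Fin d)} {ε T : ℝ}
    {f₀ : Measure (EuclideanSpace ℝ (Fin d) × EuclideanSpace ℝ (Fin d))}
    {f : ℝ → Measure (EuclideanSpace ℝ (Fin d) × EuclideanSpace ℝ (Fin d))}
    (hf : IsKineticMeasureSolution gradK ε T f₀ f) : IsKineticSolution_s12 gradK ε T f₀ f := by
  obtain ⟨Φ, hmeas, hinit, hderiv, hf⟩ := hf
  refine ⟨Φ, ⟨hmeas, hinit, fun p t ht ↦ (hderiv p t ht).1, fun p t ht ↦ ?_⟩, hf⟩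
  have hmap : f₀.map (fun q ↦ (Φ t q).1) = (f t).map Prod.fst := by
    rw [hf t ht, Measure.map_map measurable_fst (hmeas t)]
    rfl
  rw [hmap]
  exact (hderiv p t ht).2

/-- **Macroscopic (zero-inertia) limit of the kinetic aggregation equation
(Theorem 5.1).** Let `∇K ∈ W^{1,∞}`, `f₀` a compactly supported probability
measure on `ℝ^d × ℝ^d`, and for each `ε > 0` let `fε ε` be a measure solution
of the kinetic equation with inertia parameter `ε`, with x-marginals
`ρ_ε t = (fε ε t).map Prod.fst`. Then there is a narrowly continuous family
`ρ t` of compactly supported probability measures such that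
(a) `ρ_ε t → ρ t` weakly as `ε → 0⁺` for each `t ∈ [0,T]`;
(b) `∇K ∗ ρ_ε → ∇K ∗ ρ` uniformly on `[0,T] × Ω` for every compact `Ω`;
(c) `ρ` is a weak solution of `∂ₜρ = ∇·((∇K ∗ ρ) ρ)` with initial datum
`ρ₀ = f₀.map Prod.fst`, tested against `ψ ∈ C¹_c([0,T); C¹_b(ℝ^d))`. -/
theorem macroscopic_limit_kinetic_aggregation
    (d : ℕ) (T M : ℝ) (hT : 0 < T) (hM : 0 ≤ M)
    (gradK : EuclideanSpace ℝ (Fin d) → EuclideanSpace ℝ (Fin d)) (L : NNReal)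
    (hbound : ∀ z, ‖gradK z‖ ≤ M)
    (hlip : LipschitzWith L gradK)
    (f₀ : Measure (EuclideanSpace ℝ (Fin d) × EuclideanSpace ℝ (Fin d)))
    [IsProbabilityMeasure f₀]
    (hsupp : ∃ R₀ : ℝ, f₀ {p | R₀ < max ‖p.1‖ ‖p.2‖} = 0)
    (fε : ℝ → ℝ → Measure (EuclideanSpace ℝ (Fin d) × EuclideanSpace ℝ (Fin d)))
    (hfε : ∀ ε > (0:ℝ), IsKineticMeasureSolution gradK ε T f₀ (fε ε)) :
    ∃ ρ : ℝ → Measure (EuclideanSpace ℝ (Fin d)),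
      (∀ t ∈ Icc (0:ℝ) T, IsProbabilityMeasure (ρ t)) ∧
      (∃ R : ℝ, ∀ t ∈ Icc (0:ℝ) T, ρ t {x | R < ‖x‖} = 0) ∧
      -- narrow continuity in time
      (∀ ψ : BoundedContinuousFunction (EuclideanSpace ℝ (Fin d)) ℝ,
        ContinuousOn (fun t => ∫ x, ψ x ∂(ρ t)) (Icc 0 T)) ∧
      -- (a) weak convergence of the marginals for every t
      (∀ t ∈ Icc (0:ℝ) T,
        ∀ ψ : BoundedContinuousFunction (EuclideanSpace ℝ (Fin d)) ℝ,
          Tendsto (fun ε => ∫ x, ψ x ∂((fε ε t).map Prod.fst)) (𝓝[>] (0:ℝ))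
            (𝓝 (∫ x, ψ x ∂(ρ t)))) ∧
      -- (b) locally uniform convergence of the interaction fields
      (∀ Ω : Set (EuclideanSpace ℝ (Fin d)), IsCompact Ω →
        TendstoUniformlyOn
          (fun ε (p : ℝ × EuclideanSpace ℝ (Fin d)) =>
            interactionField gradK ((fε ε p.1).map Prod.fst) p.2)
          (fun p => interactionField gradK (ρ p.1) p.2)
          (𝓝[>] (0:ℝ)) (Icc 0 T ×ˢ Ω)) ∧
      -- (c) ρ is a weak solution of the aggregation equation ∂ₜρ = ∇·((∇K ∗ ρ) ρ)
      (∀ ψ : ℝ × EuclideanSpace ℝ (Fin d) → ℝ,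
        ContDiff ℝ 1 ψ →
        (∃ T' : ℝ, T' < T ∧ ∀ t, T' ≤ t → ∀ x, ψ (t, x) = 0) →
        (∃ Cψ : ℝ, ∀ p, |ψ p| ≤ Cψ ∧ ‖fderiv ℝ ψ p‖ ≤ Cψ) →
        (∫ t in (0:ℝ)..T, ∫ x, fderiv ℝ ψ (t, x) (1, 0) ∂(ρ t)) -
          (∫ t in (0:ℝ)..T, ∫ x,
            fderiv ℝ ψ (t, x) (0, interactionField gradK (ρ t) x) ∂(ρ t)) +
          (∫ x, ψ (0, x) ∂(f₀.map Prod.fst)) = 0) := by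
  obtain ⟨R₀, hR₀⟩ := hsupp
  obtain ⟨ρ, hρ, hsuppρ, hcont, hweak, hfield, hsol⟩ :=
    macroscopic_limit_kinetic_aggregation_general hT.le hbound hlip f₀ fε
      fun ε hε ↦ (hfε ε hε).isKineticSolution
  have hfst : f₀ {p | R₀ < ‖p.1‖} = 0 :=
    measure_mono_null (fun p (hp : R₀ < ‖p.1‖) ↦ hp.trans_le (le_max_left _ _)) hR₀
  refine ⟨ρ, fun t _ ↦ hρ t, ⟨R₀ + M * T, fun t ht ↦ ?_⟩, hcont, hweak,
    fun Ω _ ↦ hfield.mono (prod_mono_right (subset_univ Ω)), hsol⟩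
  refine measure_mono_null (fun x (hx : R₀ + M * T < ‖x‖) ↦ show R₀ + M * t < ‖x‖ from ?_)
    (hsuppρ R₀ hfst t ht)
  linarith [mul_le_mul_of_nonneg_left ht.2 hM]
end
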